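/- arXiv:math-ph/0509020 — 15 statements merged into one kernel-verified Lean document; each statement's English description precedes it below -/
import Mathlib

section
/- Let H be a complex Hilbert space and let A be an abelian von Neumann algebra acting on H. Then the map sending a character τ of A to the set β_τ = {p ∈ P(A) : p ≠ 0 and τ(p) = 1} is a bijection from the Gelfand spectrum (character space) of A onto the set of quasipoints of the projection lattice P(A), and this bijection is a homeomorphism from the Gelfand spectrum (with its weak-* topology) onto the Stone spectrum Q(P(A)). -/
/-- A filter base in an ordered set `L` with least element `⊥`:
a nonempty subset not containing `⊥` in which any two elements have a common lower bound. -/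
def IsFilterBase {L : Type*} [PartialOrder L] [OrderBot L] (B : Set L) : Prop :=
  B.Nonempty ∧ ⊥ ∉ B ∧ ∀ a ∈ B, ∀ b ∈ B, ∃ c ∈ B, c ≤ a ∧ c ≤ b

/-- A quasipoint is a maximal filter base. -/
def IsQuasipoint {L : Type*} [PartialOrder L] [OrderBot L] (B : Set L) : Prop :=
  IsFilterBase B ∧ ∀ C : Set L, IsFilterBase C → B ⊆ C → C = B

/-- The set of quasipoints of `L`. -/
def Quasipoint (L : Type*) [PartialOrder L] [OrderBot L] : Type _ :=
  {B : Set L // IsQuasipoint B}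

/-- The basic (cl)open set of the Stone spectrum determined by `a : L`. -/
def Qset {L : Type*} [PartialOrder L] [OrderBot L] (a : L) : Set (Quasipoint L) :=
  {B | a ∈ B.1}

/-- The Stone topology on the set of quasipoints, generated by the sets `Qset a`. -/
instance {L : Type*} [PartialOrder L] [OrderBot L] : TopologicalSpace (Quasipoint L) :=
  TopologicalSpace.generateFrom (Set.range (Qset : L → Set (Quasipoint L)))

/-- The projections of a von Neumann algebra `A`: the self-adjoint idempotents in `A`. -/
def Projection {H : Type*} [NormedAddCommGroup H] [InnerProductSpace ℂ H] [CompleteSpace H]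
    (A : VonNeumannAlgebra H) : Type _ :=
  {p : A.toStarSubalgebra // star p = p ∧ p * p = p}

/-- The projection lattice ordering: `p ≤ q` iff `p * q = p`. -/
noncomputable instance {H : Type*} [NormedAddCommGroup H] [InnerProductSpace ℂ H]
    [CompleteSpace H] (A : VonNeumannAlgebra H) : PartialOrder (Projection A) where
  le p q := p.1 * q.1 = p.1
  le_refl p := p.2.2
  le_trans p q r h1 h2 := by
    show p.1 * r.1 = p.1
    calc p.1 * r.1 = (p.1 * q.1) * r.1 := by rw [h1]
      _ = p.1 * (q.1 * r.1) := mul_assoc _ _ _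
      _ = p.1 * q.1 := by rw [h2]
      _ = p.1 := h1
  le_antisymm p q h1 h2 := by
    have h3 : q.1 * p.1 = p.1 := by
      have h := congrArg star h1
      rwa [star_mul, p.2.1, q.2.1] at h
    exact Subtype.ext (h3.symm.trans h2)

/-- `0` is the least projection. -/
noncomputable instance {H : Type*} [NormedAddCommGroup H] [InnerProductSpace ℂ H]
    [CompleteSpace H] (A : VonNeumannAlgebra H) : OrderBot (Projection A) where
  bot := ⟨0, by simp⟩
  bot_le p := show (0 : A.toStarSubalgebra) * p.1 = 0 from zero_mul _

open WeakDual in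
theorem aux_sep {A : Type*} [CommCStarAlgebra A] (τ σ : characterSpace ℂ A) (h : τ ≠ σ) :
    ∃ a b : A, a * b = 0 ∧ τ a ≠ 0 ∧ σ b ≠ 0 := by
  obtain ⟨f, hf0, hf1, -⟩ := exists_continuous_zero_one_of_isClosed
    (isClosed_singleton (x := σ)) (isClosed_singleton (x := τ)) (by simpa using h.symm)
  have hf0 : f σ = 0 := by simpa using hf0 rfl
  have hf1 : f τ = 1 := by simpa using hf1 rfl
  let F : C(characterSpace ℂ A, ℂ) := ⟨fun x => ((max (f x - 1/2) 0 : ℝ) : ℂ), by fun_prop⟩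
  let G : C(characterSpace ℂ A, ℂ) := ⟨fun x => ((max (1/2 - f x) 0 : ℝ) : ℂ), by fun_prop⟩
  have key : ∀ (K : C(characterSpace ℂ A, ℂ)) (x : characterSpace ℂ A),
      x ((gelfandStarTransform A).symm K) = K x := fun K x => by
    have := (gelfandStarTransform A).apply_symm_apply K
    exact congrArg (fun L : C(characterSpace ℂ A, ℂ) => L x) this
  refine ⟨(gelfandStarTransform A).symm F, (gelfandStarTransform A).symm G, ?_, ?_, ?_⟩
  · rw [← map_mul]
    have : F * G = 0 := by
      ext x
      simp only [F, G, ContinuousMap.mul_apply, ContinuousMap.coe_mk, ContinuousMap.zero_apply]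
      norm_cast
      rcases le_total (f x) (1/2) with h | h
      · rw [max_eq_right (by linarith)]; simp
      · rw [max_eq_right (a := 1/2 - f x) (by linarith)]; simp
    rw [this, map_zero]
  · rw [key]; simp only [F, ContinuousMap.coe_mk, hf1]; norm_num
  · rw [key]; simp only [G, ContinuousMap.coe_mk, hf0]; norm_num

open WeakDual in
theorem aux_ne {A : Type*} [CommCStarAlgebra A] (a : A) (h : a ≠ 0) :
    ∃ τ : characterSpace ℂ A, τ a ≠ 0 := by
  by_contra! H
  apply h
  apply (gelfandStarTransform A).injective
  rw [map_zero]
  ext x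
  exact H x

section
variable {H : Type*} [NormedAddCommGroup H] [InnerProductSpace ℂ H] [CompleteSpace H]

theorem aux_closed (A : VonNeumannAlgebra H) :
    IsClosed (A.toStarSubalgebra : Set (H →L[ℂ] H)) := by
  have := A.centralizer_centralizer
  rw [VonNeumannAlgebra.coe_toStarSubalgebra, ← this]
  exact Set.isClosed_centralizer _

/-- range projection -/
theorem aux_proj (A : VonNeumannAlgebra H) (a : H →L[ℂ] H) (ha : a ∈ A) :
    ∃ p ∈ A, star p = p ∧ p * p = p ∧ p * a = a ∧
      ∀ b : H →L[ℂ] H, b * a = 0 → b * p = 0 := by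
  let K : Submodule ℂ H := a.range.topologicalClosure
  have : CompleteSpace K := (a.range.isClosed_topologicalClosure).completeSpace_coe
  have hs : IsStarProjection K.starProjection := isStarProjection_starProjection
  refine ⟨K.starProjection, ?_, hs.isSelfAdjoint, hs.isIdempotentElem, ?_, ?_⟩
  · rw [VonNeumannAlgebra.IsStarProjection.mem_iff hs]
    intro y hy
    have hc := VonNeumannAlgebra.mem_commutant_iff.1 hy a ha
    rw [Submodule.range_starProjection, Module.End.mem_invtSubmodule]
    have : a.range ≤ K.comap (y : H →ₗ[ℂ] H) := by
      rintro _ ⟨x, rfl⟩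
      apply Submodule.le_topologicalClosure
      exact ⟨y x, congrArg (fun z : H →L[ℂ] H => z x) hc⟩
    refine Submodule.topologicalClosure_minimal _ this ?_
    exact (a.range.isClosed_topologicalClosure).preimage y.continuous
  · ext x
    exact Submodule.starProjection_eq_self_iff.2 (Submodule.le_topologicalClosure _ ⟨x, rfl⟩)
  · intro b hb
    ext x
    have : K ≤ b.ker := by
      refine Submodule.topologicalClosure_minimal _ ?_ b.isClosed_ker
      rintro _ ⟨x, rfl⟩
      exact congrArg (fun z : H →L[ℂ] H => z x) hb
    exact this (Submodule.starProjection_apply_mem K x)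

theorem aux_all (A : VonNeumannAlgebra H)
    (habelian : ∀ x y : A.toStarSubalgebra, x * y = y * x) :
    CompactSpace (WeakDual.characterSpace ℂ A.toStarSubalgebra) ∧
    (∀ a : A.toStarSubalgebra, a ≠ 0 →
      ∃ τ : WeakDual.characterSpace ℂ A.toStarSubalgebra, τ a ≠ 0) ∧
    (∀ τ σ : WeakDual.characterSpace ℂ A.toStarSubalgebra, τ ≠ σ →
      ∃ a b : A.toStarSubalgebra, a * b = 0 ∧ τ a ≠ 0 ∧ σ b ≠ 0) := by
  have : IsClosed (A.toStarSubalgebra : Set (H →L[ℂ] H)) := aux_closed A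
  let : CStarAlgebra A.toStarSubalgebra := inferInstance
  let : CommCStarAlgebra A.toStarSubalgebra :=
    { (inferInstance : CStarAlgebra A.toStarSubalgebra) with mul_comm := habelian }
  exact ⟨inferInstance, aux_ne, aux_sep⟩

theorem aux_sepProj (A : VonNeumannAlgebra H)
    (habelian : ∀ x y : A.toStarSubalgebra, x * y = y * x)
    (τ σ : WeakDual.characterSpace ℂ A.toStarSubalgebra) (h : τ ≠ σ) :
    ∃ p : Projection A, τ p.1 = 1 ∧ σ p.1 = 0 := by
  obtain ⟨a, b, hab, ha, hb⟩ := (aux_all A habelian).2.2 τ σ h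
  obtain ⟨p, hpA, h1, h2, h3, h4⟩ := aux_proj A a.1 a.2
  refine ⟨⟨⟨p, hpA⟩, Subtype.ext h1, Subtype.ext h2⟩, ?_, ?_⟩
  · have : (⟨p, hpA⟩ : A.toStarSubalgebra) * a = a := Subtype.ext h3
    have := congrArg τ this
    rw [map_mul] at this
    exact mul_right_cancel₀ ha (this.trans (one_mul _).symm)
  · have : b * (⟨p, hpA⟩ : A.toStarSubalgebra) = 0 :=
      Subtype.ext (h4 b.1 (congrArg Subtype.val ((habelian b a).trans hab)))
    have := congrArg σ this
    rw [map_mul, map_zero] at this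
    exact (mul_eq_zero.1 this).resolve_left hb

theorem aux_01 (A : VonNeumannAlgebra H) (τ : WeakDual.characterSpace ℂ A.toStarSubalgebra)
    (p : Projection A) : τ p.1 = 0 ∨ τ p.1 = 1 := by
  have := congrArg τ p.2.2
  rw [map_mul] at this
  by_cases h : τ p.1 = 0
  · exact Or.inl h
  · exact Or.inr (mul_left_cancel₀ h (this.trans (mul_one _).symm))

/-- complement -/
noncomputable def auxCompl (A : VonNeumannAlgebra H) (p : Projection A) : Projection A :=
  ⟨1 - p.1, by rw [star_sub, star_one, p.2.1], by
    rw [sub_mul, mul_sub, mul_sub, p.2.2]; simp⟩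

theorem aux_disj (A : VonNeumannAlgebra H) (p c : Projection A) (h1 : c ≤ p)
    (h2 : c ≤ auxCompl A p) : c = ⊥ := by
  have h1 : c.1 * p.1 = c.1 := h1
  have h2 : c.1 * (1 - p.1) = c.1 := h2
  rw [mul_sub, mul_one, h1, sub_self] at h2
  exact Subtype.ext h2.symm

theorem aux_mem (A : VonNeumannAlgebra H) (τ : WeakDual.characterSpace ℂ A.toStarSubalgebra)
    (p : Projection A) (h : τ p.1 = 1) : p.1 ≠ 0 := by
  intro h0
  rw [h0, map_zero] at h
  exact zero_ne_one h

theorem aux_filterBase (A : VonNeumannAlgebra H)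
    (habelian : ∀ x y : A.toStarSubalgebra, x * y = y * x)
    (τ : WeakDual.characterSpace ℂ A.toStarSubalgebra) :
    IsFilterBase {p : Projection A | p.1 ≠ 0 ∧ τ p.1 = 1} := by
  have h1 : τ (1 : A.toStarSubalgebra) = 1 := map_one τ
  refine ⟨⟨⟨1, by simp⟩, aux_mem A τ _ h1, h1⟩, fun h => h.1 rfl, ?_⟩
  rintro a ⟨-, ha⟩ b ⟨-, hb⟩
  let c : Projection A := ⟨a.1 * b.1, by rw [star_mul, a.2.1, b.2.1, habelian], by
    rw [mul_assoc, habelian b.1, ← mul_assoc, ← mul_assoc, a.2.2, mul_assoc, b.2.2]⟩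
  have hc : τ c.1 = 1 := (map_mul τ a.1 b.1).trans (by rw [ha, hb, one_mul])
  refine ⟨c, ⟨aux_mem A τ _ hc, hc⟩, ?_, ?_⟩
  · change a.1 * b.1 * a.1 = a.1 * b.1
    rw [habelian, ← mul_assoc, a.2.2]
  · change a.1 * b.1 * b.1 = a.1 * b.1
    rw [mul_assoc, b.2.2]

theorem aux_quasi (A : VonNeumannAlgebra H)
    (habelian : ∀ x y : A.toStarSubalgebra, x * y = y * x)
    (τ : WeakDual.characterSpace ℂ A.toStarSubalgebra) :
    IsQuasipoint {p : Projection A | p.1 ≠ 0 ∧ τ p.1 = 1} := by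
  refine ⟨aux_filterBase A habelian τ, fun C hC hsub => subset_antisymm (fun p hp => ?_) hsub⟩
  rcases aux_01 A τ p with h | h
  · exfalso
    have h1 : τ (auxCompl A p).1 = 1 := by
      change τ (1 - p.1) = 1
      rw [map_sub, map_one, h, sub_zero]
    obtain ⟨c, hc, hc1, hc2⟩ := hC.2.2 p hp _ (hsub ⟨aux_mem A τ _ h1, h1⟩)
    exact hC.2.1 (aux_disj A p c hc1 hc2 ▸ hc)
  · exact ⟨aux_mem A τ _ h, h⟩

theorem aux_surj (A : VonNeumannAlgebra H)
    (habelian : ∀ x y : A.toStarSubalgebra, x * y = y * x) (B : Set (Projection A))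
    (hB : IsQuasipoint B) : ∃ τ : WeakDual.characterSpace ℂ A.toStarSubalgebra,
      {p : Projection A | p.1 ≠ 0 ∧ τ p.1 = 1} = B := by
  obtain ⟨hcomp, hne, -⟩ := aux_all A habelian
  have hcont : ∀ a : A.toStarSubalgebra, Continuous
      fun τ : WeakDual.characterSpace ℂ A.toStarSubalgebra => τ a := fun a =>
    (WeakDual.eval_continuous a).comp continuous_subtype_val
  let S : B → Set (WeakDual.characterSpace ℂ A.toStarSubalgebra) := fun p => {τ | τ p.1.1 = 1}
  have hcl : ∀ p, IsClosed (S p) := fun p => isClosed_eq (hcont _) continuous_const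
  have : Nonempty B := hB.1.1.to_subtype
  have := IsCompact.nonempty_iInter_of_directed_nonempty_isCompact_isClosed S ?_ ?_
    (fun p => (hcl p).isCompact) hcl
  · obtain ⟨τ, hτ⟩ := this
    refine ⟨τ, hB.2 _ (aux_filterBase A habelian τ) fun p hp => ?_⟩
    have h : τ p.1 = 1 := Set.mem_iInter.1 hτ ⟨p, hp⟩
    exact ⟨aux_mem A τ _ h, h⟩
  · have mono : ∀ (c p : Projection A), c ≤ p →
        ∀ τ : WeakDual.characterSpace ℂ A.toStarSubalgebra, τ c.1 = 1 → τ p.1 = 1 := by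
      intro c p h τ hτ
      have h : c.1 * p.1 = c.1 := h
      have := congrArg τ h
      rwa [map_mul, hτ, one_mul] at this
    rintro ⟨p, hp⟩ ⟨q, hq⟩
    obtain ⟨c, hc, h1, h2⟩ := hB.1.2.2 p hp q hq
    exact ⟨⟨c, hc⟩, fun τ hτ => mono c p h1 τ hτ, fun τ hτ => mono c q h2 τ hτ⟩
  · rintro ⟨p, hp⟩
    have hp0 : p.1 ≠ 0 := fun h => hB.1.2.1 ((Subtype.ext h : p = ⊥) ▸ hp)
    obtain ⟨τ, hτ⟩ := hne p.1 hp0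
    exact ⟨τ, (aux_01 A τ p).resolve_left hτ⟩

end

/-- For an abelian von Neumann algebra `A` on a Hilbert space `H`, the map sending a character
`τ` of `A` to `β_τ = {p ∈ P(A) : p ≠ 0 ∧ τ p = 1}` is a bijection from the Gelfand spectrum
(character space) of `A` onto the set of quasipoints of the projection lattice of `A`, which is
moreover a homeomorphism from the Gelfand spectrum (with the weak-* topology) onto the Stone
spectrum of the projection lattice. -/
theorem gelfandSpectrum_homeo_stoneSpectrum {H : Type*} [NormedAddCommGroup H]
    [InnerProductSpace ℂ H] [CompleteSpace H] (A : VonNeumannAlgebra H)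
    (habelian : ∀ x y : A.toStarSubalgebra, x * y = y * x) :
    (∀ τ : WeakDual.characterSpace ℂ A.toStarSubalgebra,
      IsQuasipoint {p : Projection A | p.1 ≠ 0 ∧ τ p.1 = 1}) ∧
    ∃ h : WeakDual.characterSpace ℂ A.toStarSubalgebra ≃ₜ Quasipoint (Projection A),
      ∀ τ : WeakDual.characterSpace ℂ A.toStarSubalgebra,
        (h τ).1 = {p : Projection A | p.1 ≠ 0 ∧ τ p.1 = 1} := by
  refine ⟨aux_quasi A habelian, ?_⟩
  obtain ⟨hcomp, -, -⟩ := aux_all A habelian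
  have hcont : ∀ a : A.toStarSubalgebra, Continuous
      fun τ : WeakDual.characterSpace ℂ A.toStarSubalgebra => τ a := fun a =>
    (WeakDual.eval_continuous a).comp continuous_subtype_val
  let f : WeakDual.characterSpace ℂ A.toStarSubalgebra → Quasipoint (Projection A) :=
    fun τ => ⟨_, aux_quasi A habelian τ⟩
  have hsep : ∀ τ σ : WeakDual.characterSpace ℂ A.toStarSubalgebra, τ ≠ σ →
      ∃ p q : Projection A, f τ ∈ Qset p ∧ f σ ∈ Qset q ∧ Disjoint (Qset p) (Qset q) := by
    intro τ σ h
    obtain ⟨p, h1, h2⟩ := aux_sepProj A habelian τ σ h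
    have h3 : σ (auxCompl A p).1 = 1 := by
      change σ (1 - p.1) = 1
      rw [map_sub, map_one, h2, sub_zero]
    refine ⟨p, auxCompl A p, ⟨aux_mem A τ _ h1, h1⟩, ⟨aux_mem A σ _ h3, h3⟩, ?_⟩
    rw [Set.disjoint_left]
    intro B hp hq
    obtain ⟨c, hc, hc1, hc2⟩ := B.2.1.2.2 _ hp _ hq
    exact B.2.1.2.1 (aux_disj A p c hc1 hc2 ▸ hc)
  have hsurj : Function.Surjective f := fun B => by
    obtain ⟨τ, hτ⟩ := aux_surj A habelian B.1 B.2
    exact ⟨τ, Subtype.ext hτ⟩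
  have hinj : Function.Injective f := fun τ σ h => by
    by_contra hn
    obtain ⟨p, q, h1, h2, h3⟩ := hsep τ σ hn
    exact Set.disjoint_left.1 h3 h1 (h ▸ h2)
  have hopen : ∀ p : Projection A, IsOpen (Qset p) := fun p =>
    TopologicalSpace.isOpen_generateFrom_of_mem ⟨p, rfl⟩
  have : T2Space (Quasipoint (Projection A)) := ⟨fun B C hBC => by
    obtain ⟨τ, rfl⟩ := hsurj B
    obtain ⟨σ, rfl⟩ := hsurj C
    obtain ⟨p, q, h1, h2, h3⟩ := hsep τ σ (fun h => hBC (congrArg f h))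
    exact ⟨_, _, hopen p, hopen q, h1, h2, h3⟩⟩
  have hf : Continuous f := by
    refine continuous_generateFrom_iff.2 ?_
    rintro _ ⟨p, rfl⟩
    have : f ⁻¹' Qset p = {τ | τ p.1 ≠ 0} := by
      ext τ
      constructor
      · rintro ⟨-, h⟩
        change τ p.1 ≠ 0
        rw [h]; exact one_ne_zero
      · intro h
        have h := (aux_01 A τ p).resolve_left h
        exact ⟨aux_mem A τ _ h, h⟩
    rw [this]
    exact isOpen_ne_fun (hcont _) continuous_const
  exact ⟨Continuous.homeoOfEquivCompactToT2 (f := Equiv.ofBijective f ⟨hinj, hsurj⟩) hf,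
    fun τ => rfl⟩
end

section
/- Let L be a completely distributive complete lattice. Then for every family (a_k)_{k ∈ K} in L the closure of ⋃_{k ∈ K} Q_{a_k}(L) in the Stone spectrum Q(L) equals Q_{⋁_{k ∈ K} a_k}(L); consequently the Stone spectrum Q(L) is extremally disconnected (the closure of every open set is open). -/
theorem qp_mem_iff {L : Type*} [Order.Frame L] (B : Quasipoint L) (a : L) :
    a ∈ B.1 ↔ ∀ b ∈ B.1, a ⊓ b ≠ ⊥ := by
  obtain ⟨B, ⟨hne, hbot, hdir⟩, hmax⟩ := B
  constructor
  · intro ha b hb h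
    obtain ⟨c, hc, hca, hcb⟩ := hdir a ha b hb
    have : c = ⊥ := le_bot_iff.1 (h ▸ le_inf hca hcb)
    exact hbot (this ▸ hc)
  · intro h
    have hC : IsFilterBase {x : L | ∃ b ∈ B, a ⊓ b ≤ x} := by
      refine ⟨?_, ?_, ?_⟩
      · obtain ⟨b, hb⟩ := hne
        exact ⟨a, b, hb, inf_le_left⟩
      · rintro ⟨b, hb, hle⟩
        exact h b hb (le_bot_iff.1 hle)
      · rintro x ⟨b, hb, hx⟩ y ⟨c, hc, hy⟩
        obtain ⟨d, hd, hdb, hdc⟩ := hdir b hb c hc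
        exact ⟨a ⊓ d, ⟨d, hd, le_rfl⟩, (inf_le_inf_left a hdb).trans hx,
          (inf_le_inf_left a hdc).trans hy⟩
    have hEq := hmax _ hC (fun b hb => ⟨b, hb, inf_le_right⟩)
    obtain ⟨b, hb⟩ := hne
    have : a ∈ {x : L | ∃ b ∈ B, a ⊓ b ≤ x} := ⟨b, hb, inf_le_left⟩
    rw [hEq] at this
    exact this

theorem qp_exists {L : Type*} [Order.Frame L] (a : L) (ha : a ≠ ⊥) :
    ∃ B : Quasipoint L, a ∈ B.1 := by
  have h0 : IsFilterBase ({a} : Set L) := by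
    refine ⟨⟨a, rfl⟩, fun h => ha (Set.mem_singleton_iff.1 h).symm, ?_⟩
    rintro x rfl y rfl
    exact ⟨_, rfl, le_rfl, le_rfl⟩
  obtain ⟨M, hM, hmax⟩ := zorn_subset_nonempty {C : Set L | IsFilterBase C} (by
    intro c hc hchain hcne
    refine ⟨⋃₀ c, ⟨?_, ?_, ?_⟩, fun s hs => Set.subset_sUnion_of_mem hs⟩
    · obtain ⟨s, hs⟩ := hcne
      obtain ⟨x, hx⟩ := (hc hs).1
      exact ⟨x, s, hs, hx⟩
    · rintro ⟨s, hs, hb⟩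
      exact (hc hs).2.1 hb
    · rintro x ⟨s, hs, hx⟩ y ⟨t, ht, hy⟩
      rcases hchain.total hs ht with h | h
      · obtain ⟨z, hz, h1⟩ := (hc ht).2.2 x (h hx) y hy
        exact ⟨z, ⟨t, ht, hz⟩, h1⟩
      · obtain ⟨z, hz, h1⟩ := (hc hs).2.2 x hx y (h hy)
        exact ⟨z, ⟨s, hs, hz⟩, h1⟩) {a} h0
  exact ⟨⟨M, hmax.prop, fun C hC h => (hmax.eq_of_subset hC h).symm⟩, hM rfl⟩

theorem qp_up {L : Type*} [Order.Frame L] (B : Quasipoint L) {a b : L} (ha : a ∈ B.1)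
    (h : a ≤ b) : b ∈ B.1 := by
  rw [qp_mem_iff] at ha ⊢
  intro c hc h0
  exact ha c hc (le_bot_iff.1 (h0 ▸ inf_le_inf_right c h))

theorem qp_inf {L : Type*} [Order.Frame L] (a b : L) :
    Qset (a ⊓ b) = Qset a ∩ Qset b := by
  ext B
  constructor
  · intro h
    exact ⟨qp_up B h inf_le_left, qp_up B h inf_le_right⟩
  · rintro ⟨h1, h2⟩
    obtain ⟨c, hc, ha, hb⟩ := B.2.1.2.2 a h1 b h2
    exact qp_up B hc (le_inf ha hb)

theorem qp_isOpen {L : Type*} [Order.Frame L] (a : L) : IsOpen (Qset a) :=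
  TopologicalSpace.isOpen_generateFrom_of_mem ⟨a, rfl⟩

theorem qp_basis {L : Type*} [Order.Frame L] {U : Set (Quasipoint L)} (hU : IsOpen U) :
    ∀ B ∈ U, ∃ a ∈ B.1, Qset a ⊆ U := by
  induction hU with
  | basic s hs =>
    obtain ⟨a, rfl⟩ := hs
    exact fun B hB => ⟨a, hB, subset_rfl⟩
  | univ =>
    intro B _
    obtain ⟨a, ha⟩ := B.2.1.1
    exact ⟨a, ha, Set.subset_univ _⟩
  | inter s t _ _ ihs iht =>
    rintro B ⟨h1, h2⟩
    obtain ⟨a, ha, hs⟩ := ihs B h1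
    obtain ⟨b, hb, ht⟩ := iht B h2
    have hm : B ∈ Qset (a ⊓ b) := by rw [qp_inf]; exact ⟨ha, hb⟩
    refine ⟨a ⊓ b, hm, ?_⟩
    rw [qp_inf]
    exact Set.inter_subset_inter hs ht
  | sUnion S _ ih =>
    rintro B ⟨s, hs, hB⟩
    obtain ⟨a, ha, h⟩ := ih s hs B hB
    exact ⟨a, ha, h.trans (Set.subset_sUnion_of_mem hs)⟩

theorem qp_closure {L : Type*} [Order.Frame L] {K : Type*} (a : K → L) :
    closure (⋃ k, Qset (a k)) = Qset (⨆ k, a k) := by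
  ext B
  rw [mem_closure_iff]
  change _ ↔ (⨆ k, a k) ∈ B.1
  rw [qp_mem_iff]
  constructor
  · intro h b hb h0
    obtain ⟨C, hCb, hC⟩ := h (Qset b) (qp_isOpen b) hb
    obtain ⟨k, hk⟩ := Set.mem_iUnion.1 hC
    exact (qp_mem_iff C _).1 (qp_up C hk (le_iSup a k)) b hCb h0
  · intro h U hU hB
    obtain ⟨b, hb, hbU⟩ := qp_basis hU B hB
    have h1 := h b hb
    rw [iSup_inf_eq, Ne, iSup_eq_bot, not_forall] at h1
    obtain ⟨k, hk⟩ := h1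
    obtain ⟨C, hC⟩ := qp_exists _ hk
    exact ⟨C, hbU (qp_up C hC inf_le_right), Set.mem_iUnion.2 ⟨k, qp_up C hC inf_le_left⟩⟩

/-- If `L` is a completely distributive (complete) lattice, then for every family `(a k)` in `L`
the closure of `⋃ k, Qset (a k)` in the Stone spectrum equals `Qset (⨆ k, a k)`; consequently
the Stone spectrum of `L` is extremally disconnected. -/
theorem stoneSpectrum_extremallyDisconnected_of_completelyDistrib
    {L : Type*} [CompletelyDistribLattice L] :
    (∀ {K : Type*} (a : K → L),
      closure (⋃ k, Qset (a k)) = Qset (⨆ k, a k)) ∧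
    ExtremallyDisconnected (Quasipoint L) := by
  refine ⟨fun a => qp_closure a, ⟨fun U hU => ?_⟩⟩
  have hEq : U = ⋃ k : {a : L // Qset a ⊆ U}, Qset k.1 := by
    ext B
    constructor
    · intro hB
      obtain ⟨a, ha, h⟩ := qp_basis hU B hB
      exact Set.mem_iUnion.2 ⟨⟨a, h⟩, ha⟩
    · intro hB
      obtain ⟨k, hk⟩ := Set.mem_iUnion.1 hB
      exact k.2 hk
  rw [hEq, qp_closure]
  exact qp_isOpen _
end

section
/- Let L be an orthomodular lattice. The following are equivalent: (i) L is distributive; (ii) for all a, b ∈ L, every quasipoint of L containing a ∨ b contains a or contains b (i.e. Q_a(L) ∪ Q_b(L) = Q_{a∨b}(L)); (iii) for every a ∈ L, every quasipoint of L contains a or contains a⊥ (i.e. Q_a(L) ∪ Q_{a⊥}(L) = Q(L)). -/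
theorem qp_mem {L : Type*} [Lattice L] [BoundedOrder L] {B : Set L} (hB : IsQuasipoint B)
    (a : L) (h : ∀ b ∈ B, a ⊓ b ≠ ⊥) : a ∈ B := by
  obtain ⟨⟨⟨b0, hb0⟩, hbot, hdir⟩, hmax⟩ := hB
  have hC := hmax {x | ∃ b ∈ B, a ⊓ b ≤ x} ⟨⟨a, b0, hb0, inf_le_left⟩, ?_, ?_⟩
    (fun b hb => ⟨b, hb, inf_le_right⟩)
  · rw [← hC]
    exact ⟨b0, hb0, inf_le_left⟩
  · rintro ⟨b, hb, hle⟩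
    exact h b hb (le_bot_iff.1 hle)
  · rintro x ⟨b, hb, hx⟩ y ⟨b', hb', hy⟩
    obtain ⟨c, hc, h1, h2⟩ := hdir b hb b' hb'
    exact ⟨a ⊓ c, ⟨c, hc, le_rfl⟩, (inf_le_inf_left a h1).trans hx,
      (inf_le_inf_left a h2).trans hy⟩

theorem qp_up_s2 {L : Type*} [Lattice L] [BoundedOrder L] {B : Set L} (hB : IsQuasipoint B)
    {a x : L} (ha : a ∈ B) (hx : a ≤ x) : x ∈ B := by
  refine qp_mem hB x (fun b hb h0 => ?_)
  obtain ⟨c, hc, h1, h2⟩ := hB.1.2.2 a ha b hb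
  have : c = ⊥ := le_bot_iff.1 (h0 ▸ le_inf (h1.trans hx) h2)
  exact hB.1.2.1 (this ▸ hc)

theorem qp_exists_s2 {L : Type*} [Lattice L] [BoundedOrder L] (x : L) (hx : x ≠ ⊥) :
    ∃ B : Set L, IsQuasipoint B ∧ x ∈ B := by
  have hz : ∀ c ⊆ {B : Set L | IsFilterBase B}, IsChain (· ⊆ ·) c → c.Nonempty →
      ∃ ub ∈ {B : Set L | IsFilterBase B}, ∀ s ∈ c, s ⊆ ub := by
    intro c hc hchain ⟨B0, hB0⟩
    refine ⟨⋃₀ c, ⟨?_, ?_, ?_⟩, fun s hs => Set.subset_sUnion_of_mem hs⟩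
    · obtain ⟨y, hy⟩ := (hc hB0).1
      exact ⟨y, B0, hB0, hy⟩
    · rintro ⟨B, hB, h⟩
      exact (hc hB).2.1 h
    · rintro a ⟨A, hA, haA⟩ b ⟨B, hB, hbB⟩
      rcases hchain.total hA hB with h | h
      · obtain ⟨d, hd, h1⟩ := (hc hB).2.2 a (h haA) b hbB
        exact ⟨d, ⟨B, hB, hd⟩, h1⟩
      · obtain ⟨d, hd, h1⟩ := (hc hA).2.2 a haA b (h hbB)
        exact ⟨d, ⟨A, hA, hd⟩, h1⟩
  have hx1 : IsFilterBase ({x} : Set L) := by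
    refine ⟨⟨x, rfl⟩, fun h => hx h.symm, ?_⟩
    rintro a rfl b rfl
    exact ⟨_, rfl, le_rfl, le_rfl⟩
  obtain ⟨M, hM, hmax⟩ := zorn_subset_nonempty _ hz {x} hx1
  refine ⟨M, ⟨hmax.prop, fun C hC hMC => ?_⟩, hM rfl⟩
  exact (hmax.le_of_ge hC hMC).antisymm hMC

/-- For an orthomodular lattice `L` the following are equivalent: (i) `L` is distributive;
(ii) `Qset a ∪ Qset b = Qset (a ⊔ b)` for all `a, b` (every quasipoint containing `a ⊔ b`
contains `a` or `b`); (iii) `Qset a ∪ Qset (oc a) = Q(L)` for every `a` (every quasipoint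
contains `a` or `oc a`). -/
theorem orthomodular_distributive_tfae {L : Type*} [Lattice L] [BoundedOrder L]
    (oc : L → L)
    (h_inf_compl : ∀ a : L, a ⊓ oc a = ⊥)
    (h_sup_compl : ∀ a : L, a ⊔ oc a = ⊤)
    (h_compl_inf : ∀ a b : L, oc (a ⊓ b) = oc a ⊔ oc b)
    (h_compl_sup : ∀ a b : L, oc (a ⊔ b) = oc a ⊓ oc b)
    (h_compl_compl : ∀ a : L, oc (oc a) = a)
    (h_orthomodular : ∀ a b : L, b ≤ a → b = a ⊓ (oc a ⊔ b)) :
    List.TFAE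
      [ ∀ a b c : L, a ⊓ (b ⊔ c) = (a ⊓ b) ⊔ (a ⊓ c),
        ∀ a b : L, Qset a ∪ Qset b = Qset (a ⊔ b),
        ∀ a : L, Qset a ∪ Qset (oc a) = (Set.univ : Set (Quasipoint L)) ] := by
  have hbot : oc ⊥ = ⊤ := by simpa using h_sup_compl ⊥
  tfae_have 1 → 2 := by
    intro hd a b
    ext ⟨B, hB⟩
    change (a ∈ B ∨ b ∈ B) ↔ a ⊔ b ∈ B
    constructor
    · rintro (h | h)
      · exact qp_up_s2 hB h le_sup_left
      · exact qp_up_s2 hB h le_sup_right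
    · intro hab
      by_contra! hn
      have h1 : ∃ c ∈ B, a ⊓ c = ⊥ := by
        by_contra! h
        exact hn.1 (qp_mem hB a h)
      have h2 : ∃ c ∈ B, b ⊓ c = ⊥ := by
        by_contra! h
        exact hn.2 (qp_mem hB b h)
      obtain ⟨c1, hc1, e1⟩ := h1
      obtain ⟨c2, hc2, e2⟩ := h2
      obtain ⟨d, hd1, l1, l2⟩ := hB.1.2.2 c1 hc1 c2 hc2
      obtain ⟨e, he, m1, m2⟩ := hB.1.2.2 d hd1 _ hab
      have f1 : e ⊓ a = ⊥ := le_bot_iff.1 (e1 ▸ le_inf inf_le_right (inf_le_left.trans (m1.trans l1)))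
      have f2 : e ⊓ b = ⊥ := le_bot_iff.1 (e2 ▸ le_inf inf_le_right (inf_le_left.trans (m1.trans l2)))
      have f3 := hd e a b
      rw [inf_eq_left.2 m2, f1, f2, sup_idem] at f3
      exact hB.1.2.1 (f3 ▸ he)
  tfae_have 2 → 3 := by
    intro h a
    rw [h, h_sup_compl]
    ext ⟨B, hB⟩
    refine ⟨fun _ => trivial, fun _ => ?_⟩
    obtain ⟨b, hb⟩ := hB.1.1
    exact qp_up_s2 hB hb le_top
  tfae_have 3 → 1 := by
    intro h
    have key : ∀ a x : L, x ⊓ a = ⊥ → x ⊓ oc a = ⊥ → x = ⊥ := by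
      intro a x h1 h2
      by_contra hx
      obtain ⟨B, hB, hxB⟩ := qp_exists_s2 x hx
      have aux : ∀ y ∈ B, x ⊓ y ≠ ⊥ := by
        intro y hy h0
        obtain ⟨c, hc, l1, l2⟩ := hB.1.2.2 x hxB y hy
        exact hB.1.2.1 ((le_bot_iff.1 (h0 ▸ le_inf l1 l2) : c = ⊥) ▸ hc)
      have hm : (⟨B, hB⟩ : Quasipoint L) ∈ Qset a ∪ Qset (oc a) := by
        rw [h]; trivial
      rcases hm with hm | hm
      · exact aux a hm h1
      · exact aux _ hm h2
    have disj : ∀ v p q : L, v ≤ p → p ≤ q → v ≤ oc q → v = ⊥ := by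
      intro v p q h1 h2 h3
      exact le_bot_iff.1 (h_inf_compl q ▸ le_inf (h1.trans h2) h3)
    have mono : ∀ p q : L, p ≤ q → oc q ≤ oc p := by
      intro p q hpq
      have := h_compl_sup p q
      rw [sup_eq_right.2 hpq] at this
      rw [this]; exact inf_le_left
    have comm : ∀ a b : L, b = (b ⊓ a) ⊔ (b ⊓ oc a) := by
      intro a b
      have hy : (b ⊓ a) ⊔ (b ⊓ oc a) ≤ b := sup_le inf_le_left inf_le_left
      have hx : b ⊓ oc ((b ⊓ a) ⊔ (b ⊓ oc a)) = ⊥ := by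
        apply key a
        · exact disj _ (b ⊓ a) _ (le_inf (inf_le_left.trans inf_le_left) inf_le_right)
            le_sup_left (inf_le_left.trans inf_le_right)
        · exact disj _ (b ⊓ oc a) _ (le_inf (inf_le_left.trans inf_le_left) inf_le_right)
            le_sup_right (inf_le_left.trans inf_le_right)
      have e := h_compl_inf b (oc ((b ⊓ a) ⊔ (b ⊓ oc a)))
      rw [hx, hbot, h_compl_compl] at e
      have o := h_orthomodular b _ hy
      rw [← e, inf_top_eq] at o
      exact o.symm
    intro a b c
    have below : ∀ v b : L, v ⊓ b = ⊥ → v ≤ oc b := by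
      intro v b h0
      have := comm b v
      rw [h0, bot_sup_eq] at this
      exact this.le.trans inf_le_right
    apply le_antisymm
    · have hv : (a ⊓ (b ⊔ c)) ⊓ oc ((a ⊓ b) ⊔ (a ⊓ c)) = ⊥ := by
        set v := (a ⊓ (b ⊔ c)) ⊓ oc ((a ⊓ b) ⊔ (a ⊓ c)) with hvdef
        have va : v ≤ a := inf_le_left.trans inf_le_left
        have vbc : v ≤ b ⊔ c := inf_le_left.trans inf_le_right
        have vz : v ≤ oc ((a ⊓ b) ⊔ (a ⊓ c)) := inf_le_right
        have hb : v ≤ oc b := below _ _ (disj _ (a ⊓ b) _ (inf_le_inf_right b va)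
          le_sup_left (inf_le_left.trans vz))
        have hc : v ≤ oc c := below _ _ (disj _ (a ⊓ c) _ (inf_le_inf_right c va)
          le_sup_right (inf_le_left.trans vz))
        exact disj v _ _ vbc le_rfl (h_compl_sup b c ▸ le_inf hb hc)
      have := below _ _ hv
      rwa [h_compl_compl] at this
    · exact sup_le (inf_le_inf_left a le_sup_left) (inf_le_inf_left a le_sup_right)
  tfae_finish
end

section
/- (Nakamura) Let L be an orthocomplemented lattice. The commutativity relation C, defined by a C b iff a = (a ∧ b) ∨ (a ∧ b⊥), is symmetric (i.e. a C b implies b C a for all a, b ∈ L) if and only if L is orthomodular (i.e. b ≤ a implies b = a ∧ (a⊥ ∨ b) for all a, b ∈ L). -/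
/-- **Nakamura's theorem.** In an orthocomplemented lattice `L`, the commutativity relation
`a C b :↔ a = (a ⊓ b) ⊔ (a ⊓ bᗮ)` is symmetric if and only if `L` is orthomodular. -/
theorem commutes_symmetric_iff_orthomodular {L : Type*} [Lattice L] [BoundedOrder L]
    (oc : L → L)
    (h_inf_compl : ∀ a : L, a ⊓ oc a = ⊥)
    (h_sup_compl : ∀ a : L, a ⊔ oc a = ⊤)
    (h_compl_inf : ∀ a b : L, oc (a ⊓ b) = oc a ⊔ oc b)
    (h_compl_sup : ∀ a b : L, oc (a ⊔ b) = oc a ⊓ oc b)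
    (h_compl_compl : ∀ a : L, oc (oc a) = a) :
    (∀ a b : L, a = (a ⊓ b) ⊔ (a ⊓ oc b) → b = (b ⊓ a) ⊔ (b ⊓ oc a)) ↔
      (∀ a b : L, b ≤ a → b = a ⊓ (oc a ⊔ b)) := by
  have anti : ∀ x y : L, x ≤ y → oc y ≤ oc x := by
    intro x y h
    have := h_compl_inf x y
    rw [inf_eq_left.mpr h] at this
    rw [this]
    exact le_sup_right
  constructor
  · intro h a b hba
    have h1 := anti b a hba
    have h2 := h (oc a) (oc b) (by
      rw [inf_eq_left.mpr h1]
      exact (sup_eq_left.mpr inf_le_left).symm)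
    rw [inf_eq_right.mpr h1, h_compl_compl] at h2
    have h3 := congrArg oc h2
    rw [h_compl_sup, h_compl_inf, h_compl_compl, h_compl_compl] at h3
    rw [sup_comm (oc a) b]
    exact h3
  · intro h a b hab
    have h1 := h (oc (b ⊓ a)) (oc b) (anti _ _ inf_le_left)
    have h2 := congrArg oc h1
    rw [h_compl_inf, h_compl_sup, h_compl_compl, h_compl_compl] at h2
    have h3 := congrArg oc hab
    rw [h_compl_sup, h_compl_inf, h_compl_inf, h_compl_compl] at h3
    have h4 : oc (b ⊓ a) ⊓ b = b ⊓ oc a := by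
      rw [h_compl_inf]
      apply le_antisymm
      · refine le_inf inf_le_right ?_
        rw [h3]
        refine le_inf ?_ (inf_le_right.trans le_sup_right)
        rw [← h3, sup_comm (oc a)]
        exact inf_le_left
      · exact le_inf (inf_le_right.trans le_sup_right) inf_le_left
    rw [h4] at h2
    exact h2
end

section
/- Let L be a complete orthomodular lattice and M a nonempty subset of L. Then the commutant M^C contains 0 and 1, is closed under the orthocomplement (b ∈ M^C implies b⊥ ∈ M^C), and is closed under arbitrary suprema and infima: for every family (b_k)_{k ∈ K} in M^C, both ⋁_k b_k and ⋀_k b_k belong to M^C. In particular, M^C is a complete sublattice of L. -/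
/-- In an orthocomplemented lattice, `a` commutes with `b` if `a = (a ⊓ b) ⊔ (a ⊓ bᗮ)`. -/
def OCommutes {L : Type*} [Lattice L] (oc : L → L) (a b : L) : Prop :=
  a = (a ⊓ b) ⊔ (a ⊓ oc b)

/-- The commutant of a subset `M` of an orthocomplemented lattice. -/
def OCommutant {L : Type*} [Lattice L] (oc : L → L) (M : Set L) : Set L :=
  {b | ∀ a ∈ M, OCommutes oc a b}

/-- In a complete orthomodular lattice, the commutant of a nonempty subset contains `⊥` and `⊤`,
is closed under the orthocomplement, and is closed under arbitrary suprema and infima;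
in particular it is a complete sublattice. -/
theorem oCommutant_complete_sublattice {L : Type*} [CompleteLattice L]
    (oc : L → L)
    (h_inf_compl : ∀ a : L, a ⊓ oc a = ⊥)
    (h_sup_compl : ∀ a : L, a ⊔ oc a = ⊤)
    (h_compl_inf : ∀ a b : L, oc (a ⊓ b) = oc a ⊔ oc b)
    (h_compl_sup : ∀ a b : L, oc (a ⊔ b) = oc a ⊓ oc b)
    (h_compl_compl : ∀ a : L, oc (oc a) = a)
    (h_orthomodular : ∀ a b : L, b ≤ a → b = a ⊓ (oc a ⊔ b))
    (M : Set L) (hM : M.Nonempty) :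
    ⊥ ∈ OCommutant oc M ∧ ⊤ ∈ OCommutant oc M ∧
    (∀ b ∈ OCommutant oc M, oc b ∈ OCommutant oc M) ∧
    (∀ (K : Type*) (f : K → L), (∀ k, f k ∈ OCommutant oc M) →
      (⨆ k, f k) ∈ OCommutant oc M ∧ (⨅ k, f k) ∈ OCommutant oc M) := by
  have anti : ∀ x y : L, x ≤ y → oc y ≤ oc x := by
    intro x y h
    have h1 := h_compl_sup x y
    rw [sup_eq_right.mpr h] at h1
    rw [h1]; exact inf_le_left
  have dual : ∀ x y : L, y ≤ x → x = y ⊔ (oc y ⊓ x) := by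
    intro x y h
    have h1 := congrArg oc (h_orthomodular (oc y) (oc x) (anti _ _ h))
    simpa only [h_compl_compl, h_compl_inf, h_compl_sup] using h1
  have key : ∀ a b : L, OCommutes oc a b ↔ b ≤ oc a ⊔ (a ⊓ b) := by
    intro a b
    unfold OCommutes
    constructor
    · intro h
      have h1 : oc a = oc (a ⊓ b) ⊓ (oc a ⊔ b) := by
        have h2 := congrArg oc h
        rwa [h_compl_sup, h_compl_inf a (oc b), h_compl_compl] at h2
      have h3 := dual (oc a ⊔ b) (a ⊓ b) (inf_le_right.trans le_sup_right)
      rw [← h1] at h3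
      calc b ≤ oc a ⊔ b := le_sup_right
        _ = (a ⊓ b) ⊔ oc a := h3
        _ = _ := sup_comm _ _
    · intro h
      have h1 := anti _ _ h
      rw [h_compl_sup, h_compl_compl] at h1
      apply le_antisymm
      · calc a = (a ⊓ b) ⊔ (oc (a ⊓ b) ⊓ a) := dual a (a ⊓ b) inf_le_left
          _ ≤ _ := sup_le_sup_left (le_inf inf_le_right (by rw [inf_comm]; exact h1)) _
      · exact sup_le inf_le_left inf_le_left
  have hoc : ∀ b ∈ OCommutant oc M, oc b ∈ OCommutant oc M := by
    intro b hb a ha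
    have h := hb a ha
    unfold OCommutes at h ⊢
    rwa [h_compl_compl, sup_comm]
  have hsup : ∀ (K : Type _) (f : K → L), (∀ k, f k ∈ OCommutant oc M) →
      (⨆ k, f k) ∈ OCommutant oc M := by
    intro K f hf a ha
    rw [key]
    refine iSup_le fun k => ((key _ _).1 (hf k a ha)).trans ?_
    exact sup_le_sup_left (inf_le_inf_left _ (le_iSup f k)) _
  have hbot : ⊥ ∈ OCommutant oc M := fun a _ => (key _ _).2 bot_le
  have htop : oc ⊥ = ⊤ := by simpa using h_sup_compl ⊥
  refine ⟨hbot, htop ▸ hoc _ hbot, hoc, fun K f hf => ⟨hsup K f hf, ?_⟩⟩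
  have h : (⨅ k, f k) = oc (⨆ k, oc (f k)) := by
    apply le_antisymm
    · rw [← h_compl_compl (⨅ k, f k)]
      exact anti _ _ (iSup_le fun k => anti _ _ (iInf_le f k))
    · refine le_iInf fun k => ?_
      rw [← h_compl_compl (f k)]
      exact anti _ _ (by
        exact le_iSup (fun k => oc (f k)) k)
  rw [h]
  exact hoc _ (hsup K _ fun k => hoc _ (hf k))
end

section
/- Let L be a complete orthomodular lattice and let M ⊆ L be a sub-ortholattice (a subset containing 0 and 1 and closed under ∧, ∨ and the orthocomplement ⊥). Then: (i) M is distributive (as a lattice) if and only if M ⊆ M^C; (ii) M is a maximal distributive sub-ortholattice of L if and only if M = M^C; (iii) every maximal distributive sub-ortholattice of L is complete, i.e. closed under arbitrary suprema and infima computed in L. -/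
/-- A sub-ortholattice: a subset containing `⊥` and `⊤`, closed under meet, join and the
orthocomplement. -/
def IsSubOrtholattice {L : Type*} [Lattice L] [BoundedOrder L] (oc : L → L) (M : Set L) : Prop :=
  ⊥ ∈ M ∧ ⊤ ∈ M ∧ (∀ a ∈ M, ∀ b ∈ M, a ⊓ b ∈ M) ∧ (∀ a ∈ M, ∀ b ∈ M, a ⊔ b ∈ M) ∧
    ∀ a ∈ M, oc a ∈ M

/-- A subset is distributive (as a sublattice) if the distributive law holds for its elements. -/
def IsDistribSubset {L : Type*} [Lattice L] (M : Set L) : Prop :=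
  ∀ a ∈ M, ∀ b ∈ M, ∀ c ∈ M, a ⊓ (b ⊔ c) = (a ⊓ b) ⊔ (a ⊓ c)

/-- A maximal distributive sub-ortholattice: distributive and not properly contained in any
distributive sub-ortholattice. -/
def IsMaxDistribSubOrtholattice {L : Type*} [Lattice L] [BoundedOrder L]
    (oc : L → L) (M : Set L) : Prop :=
  IsSubOrtholattice oc M ∧ IsDistribSubset M ∧
    ∀ N : Set L, IsSubOrtholattice oc N → IsDistribSubset N → M ⊆ N → N = M

theorem aux_comm_symm {L : Type*} [CompleteLattice L] (oc : L → L)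
    (h_compl_inf : ∀ a b : L, oc (a ⊓ b) = oc a ⊔ oc b)
    (h_compl_compl : ∀ a : L, oc (oc a) = a)
    (h_compl_sup : ∀ a b : L, oc (a ⊔ b) = oc a ⊓ oc b)
    (h_orthomodular : ∀ a b : L, b ≤ a → b = a ⊓ (oc a ⊔ b))
    (a b : L) (h : OCommutes oc a b) : OCommutes oc b a := by
  unfold OCommutes at *
  have h1 : oc a = (oc a ⊔ oc b) ⊓ (oc a ⊔ b) := by
    conv_lhs => rw [h]
    rw [h_compl_sup, h_compl_inf, h_compl_inf, h_compl_compl]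
  have h2 : b ⊓ oc a = b ⊓ (oc a ⊔ oc b) := by
    rw [h1]
    apply le_antisymm
    · exact le_inf inf_le_left (inf_le_right.trans inf_le_left |>.trans (by rw [← h1]))
    · exact le_inf inf_le_left (le_inf (inf_le_right.trans (by rw [← h1]))
        (inf_le_left.trans le_sup_right))
  have h3 : oc b ≤ oc a ⊔ oc b := le_sup_right
  have h4 := congrArg oc (h_orthomodular _ _ h3)
  simp only [h_compl_inf, h_compl_sup, h_compl_compl] at h4
  rw [h2, inf_comm b a, inf_comm b]
  exact h4

theorem aux_comm_sSup {L : Type*} [CompleteLattice L] (oc : L → L) (a : L) (S : Set L)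
    (h : ∀ b ∈ S, OCommutes oc b a) : OCommutes oc (sSup S) a := by
  apply le_antisymm
  · apply sSup_le
    intro b hb
    have h1 := h b hb
    unfold OCommutes at h1
    rw [h1]
    exact sup_le_sup (inf_le_inf_right _ (le_sSup hb)) (inf_le_inf_right _ (le_sSup hb))
  · exact sup_le inf_le_left inf_le_left

theorem aux_distrib {L : Type*} [CompleteLattice L] (oc : L → L)
    (h_orthomodular : ∀ a b : L, b ≤ a → b = a ⊓ (oc a ⊔ b))
    (a b c : L) (hb : OCommutes oc b a) (hc : OCommutes oc c a) :
    a ⊓ (b ⊔ c) = (a ⊓ b) ⊔ (a ⊓ c) := by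
  apply le_antisymm
  · rw [h_orthomodular a ((a ⊓ b) ⊔ (a ⊓ c)) (sup_le inf_le_left inf_le_left)]
    apply inf_le_inf_left
    unfold OCommutes at *
    apply sup_le
    · rw [hb]
      refine sup_le ?_ (inf_le_right.trans le_sup_left)
      rw [← hb, inf_comm b a]
      exact le_sup_left.trans le_sup_right
    · rw [hc]
      refine sup_le ?_ (inf_le_right.trans le_sup_left)
      rw [← hc, inf_comm c a]
      exact le_sup_right.trans le_sup_right
  · exact sup_le (inf_le_inf_left _ le_sup_left) (inf_le_inf_left _ le_sup_right)

/-- Let `L` be a complete orthomodular lattice and `M` a sub-ortholattice of `L`. Then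
(i) `M` is distributive iff `M ⊆ Mᶜ`; (ii) `M` is a maximal distributive sub-ortholattice iff
`M = Mᶜ`; (iii) every maximal distributive sub-ortholattice is complete, i.e. closed under
arbitrary suprema and infima computed in `L`. -/
theorem maxDistrib_iff_selfCommutant {L : Type*} [CompleteLattice L]
    (oc : L → L)
    (h_inf_compl : ∀ a : L, a ⊓ oc a = ⊥)
    (h_sup_compl : ∀ a : L, a ⊔ oc a = ⊤)
    (h_compl_inf : ∀ a b : L, oc (a ⊓ b) = oc a ⊔ oc b)
    (h_compl_sup : ∀ a b : L, oc (a ⊔ b) = oc a ⊓ oc b)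
    (h_compl_compl : ∀ a : L, oc (oc a) = a)
    (h_orthomodular : ∀ a b : L, b ≤ a → b = a ⊓ (oc a ⊔ b))
    (M : Set L) (hM : IsSubOrtholattice oc M) :
    (IsDistribSubset M ↔ M ⊆ OCommutant oc M) ∧
    (IsMaxDistribSubOrtholattice oc M ↔ M = OCommutant oc M) ∧
    (IsMaxDistribSubOrtholattice oc M →
      ∀ S : Set L, S ⊆ M → sSup S ∈ M ∧ sInf S ∈ M) := by
  have symm : ∀ a b, OCommutes oc a b → OCommutes oc b a :=
    aux_comm_symm oc h_compl_inf h_compl_compl h_compl_sup h_orthomodular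
  have hoc : ∀ a b, OCommutes oc a b → OCommutes oc a (oc b) := by
    intro a b h
    unfold OCommutes at *
    rw [h_compl_compl, sup_comm]
    exact h
  have anti : ∀ a b : L, a ≤ b → oc b ≤ oc a := by
    intro a b h
    have := h_compl_inf a b
    rw [inf_eq_left.2 h] at this
    rw [this]; exact le_sup_right
  have cSup : ∀ T S : Set L, S ⊆ OCommutant oc T → sSup S ∈ OCommutant oc T :=
    fun T S hS a ha => symm _ _ (aux_comm_sSup oc a S fun b hb => symm _ _ (hS hb a ha))
  have cOc : ∀ T : Set L, ∀ b ∈ OCommutant oc T, oc b ∈ OCommutant oc T :=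
    fun T b hb a ha => hoc _ _ (hb a ha)
  have cInf : ∀ T S : Set L, S ⊆ OCommutant oc T → sInf S ∈ OCommutant oc T := by
    intro T S hS
    have h1 : sInf S = oc (sSup (oc '' S)) := by
      apply le_antisymm
      · rw [← h_compl_compl (sInf S)]
        apply anti
        apply sSup_le
        rintro _ ⟨s, hs, rfl⟩
        exact anti _ _ (sInf_le hs)
      · apply le_sInf
        intro s hs
        rw [← h_compl_compl s]
        exact anti _ _ (le_sSup ⟨_, hs, rfl⟩)
    rw [h1]
    apply cOc
    apply cSup
    rintro _ ⟨s, hs, rfl⟩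
    exact cOc _ _ (hS hs)
  have cSub : ∀ T : Set L, IsSubOrtholattice oc (OCommutant oc T) := by
    intro T
    refine ⟨?_, ?_, ?_, ?_, cOc T⟩
    · simpa using cSup T ∅ (by simp)
    · simpa using cInf T ∅ (by simp)
    · intro a ha b hb
      rw [← sInf_pair]
      exact cInf T _ (Set.insert_subset ha (Set.singleton_subset_iff.2 hb))
    · intro a ha b hb
      rw [← sSup_pair]
      exact cSup T _ (Set.insert_subset ha (Set.singleton_subset_iff.2 hb))
  have cAnti : ∀ S T : Set L, S ⊆ T → OCommutant oc T ⊆ OCommutant oc S :=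
    fun S T h b hb a ha => hb a (h ha)
  have cBi : ∀ T : Set L, T ⊆ OCommutant oc (OCommutant oc T) :=
    fun T b hb a ha => symm _ _ (ha b hb)
  have part1 : ∀ N : Set L, IsSubOrtholattice oc N →
      (IsDistribSubset N ↔ N ⊆ OCommutant oc N) := by
    intro N hN
    constructor
    · intro hd b hb a ha
      have := hd a ha b hb (oc b) (hN.2.2.2.2 b hb)
      rw [h_sup_compl, inf_top_eq] at this
      exact this
    · intro h a ha b hb c hc
      exact aux_distrib oc h_orthomodular a b c (h ha b hb) (h ha c hc)
  have part2 : IsMaxDistribSubOrtholattice oc M ↔ M = OCommutant oc M := by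
    constructor
    · rintro ⟨-, hd, hmax⟩
      have hMM := (part1 M hM).1 hd
      refine Set.Subset.antisymm hMM ?_
      intro x hx
      have hT : insert x M ⊆ OCommutant oc (insert x M) := by
        rintro b (rfl | hb) a (rfl | ha)
        · unfold OCommutes; rw [inf_idem, h_inf_compl, sup_bot_eq]
        · exact hx a ha
        · exact symm _ _ (hx b hb)
        · exact hMM hb a ha
      have hN : OCommutant oc (OCommutant oc (insert x M)) ⊆
          OCommutant oc (OCommutant oc (OCommutant oc (insert x M))) :=
        (cAnti _ _ hT).trans (cBi _)
      have := hmax _ (cSub _) ((part1 _ (cSub _)).2 hN)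
        ((Set.subset_insert x M).trans (cBi _))
      rw [← this]
      exact cBi _ (Set.mem_insert x M)
    · intro h
      refine ⟨hM, (part1 M hM).2 h.subset, ?_⟩
      intro N hN hd hMN
      refine Set.Subset.antisymm ?_ hMN
      exact ((part1 N hN).1 hd).trans ((cAnti _ _ hMN).trans h.symm.subset)
  refine ⟨part1 M hM, part2, ?_⟩
  intro h S hS
  have hm := part2.1 h
  rw [hm] at hS ⊢
  exact ⟨cSup M S hS, cInf M S hS⟩
end

section
/- Let M be a regular Hausdorff (T3) topological space. A nonempty set p of open subsets of M is a point of the lattice T(M) of open subsets of M if and only if there exists an x ∈ M such that p = {U open in M : x ∈ U}; moreover this x is uniquely determined by p. -/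
open TopologicalSpace

/-- A point of a complete lattice `L`: a nonempty subset `p` with `⊥ ∉ p`, closed under binary
meets, upward closed, and such that whenever the supremum of a set of elements belongs to `p`,
some element of that set belongs to `p`. -/
def IsLatticePoint {L : Type*} [CompleteLattice L] (p : Set L) : Prop :=
  p.Nonempty ∧ ⊥ ∉ p ∧ (∀ a ∈ p, ∀ b ∈ p, a ⊓ b ∈ p) ∧
    (∀ a ∈ p, ∀ b : L, a ≤ b → b ∈ p) ∧
    ∀ S : Set L, sSup S ∈ p → ∃ a ∈ S, a ∈ p

/-- For a regular Hausdorff (T3) space `M`, a nonempty collection `p` of open subsets of `M` is a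
point of the lattice of open sets of `M` iff `p` is the collection of open neighbourhoods of some
(necessarily unique) `x ∈ M`. -/
theorem latticePoint_opens_iff_neighbourhoods {M : Type*} [TopologicalSpace M] [T3Space M]
    (p : Set (Opens M)) (hp : p.Nonempty) :
    IsLatticePoint p ↔ ∃! x : M, p = {U : Opens M | x ∈ U} := by
  constructor
  · rintro ⟨-, hbot, hinf, hup, hsup⟩
    have hW : sSup {U : Opens M | U ∉ p} ∉ p := fun h => by
      obtain ⟨a, ha, ha'⟩ := hsup _ h
      exact ha ha'
    have hx : ∃ x : M, x ∉ sSup {U : Opens M | U ∉ p} := by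
      by_contra hcon
      push Not at hcon
      obtain ⟨U, hU⟩ := hp
      exact hW (hup U hU _ (fun y _ => hcon y))
    obtain ⟨x, hx⟩ := hx
    have h1 : ∀ U : Opens M, x ∈ U → U ∈ p := fun U hU => by
      by_contra hn
      exact hx ((le_sSup (show U ∈ {U : Opens M | U ∉ p} from hn)) hU)
    have h2 : ∀ U : Opens M, U ∈ p → x ∈ U := fun U hU => by
      by_contra hn
      refine hW (hup U hU _ (fun y hy => ?_))
      have hne : x ≠ y := by
        rintro rfl
        exact hn hy
      obtain ⟨A, B, hA, hB, hxA, hyB, hd⟩ := t2_separation hne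
      have hBp : (⟨B, hB⟩ : Opens M) ∉ p := fun hBp => by
        have h := hinf _ (h1 ⟨A, hA⟩ hxA) _ hBp
        have e : (⟨A, hA⟩ : Opens M) ⊓ ⟨B, hB⟩ = ⊥ := by
          apply Opens.ext
          exact hd.inter_eq
        rw [e] at h
        exact hbot h
      exact (le_sSup (show (⟨B, hB⟩ : Opens M) ∈ {U : Opens M | U ∉ p} from hBp)) hyB
    have he : p = {U : Opens M | x ∈ U} := Set.ext fun U => ⟨h2 U, h1 U⟩
    refine ⟨x, he, fun y hy => ?_⟩
    by_contra hne
    obtain ⟨A, B, hA, hB, hyA, hxB, hd⟩ := t2_separation hne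
    have hm : (⟨A, hA⟩ : Opens M) ∈ p := by
      rw [hy]
      exact hyA
    exact Set.disjoint_left.mp hd (h2 _ hm) hxB
  · rintro ⟨x, rfl, -⟩
    refine ⟨hp, fun h => h, fun a ha b hb => ⟨ha, hb⟩, fun a ha b hab => hab ha, fun S hS => ?_⟩
    obtain ⟨a, ha, hxa⟩ := Opens.mem_sSup.mp hS
    exact ⟨a, ha, hxa⟩
end

section
/- Let H be a complex Hilbert space of dimension greater than one. Then the lattice L(H) of closed subspaces of H has no points: there is no nonempty set p of closed subspaces of H such that (1) the zero subspace is not in p; (2) U, V ∈ p implies U ∩ V ∈ p; (3) U ∈ p and U ⊆ V (V closed) imply V ∈ p; (4) whenever the closure of the linear span of the union of a family of closed subspaces belongs to p, some member of the family belongs to p. -/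
/-- If `H` is a complex Hilbert space of dimension greater than one, then the lattice of closed
subspaces of `H` has no points: there is no nonempty collection `p` of closed subspaces of `H`
which avoids the zero subspace, is closed under binary intersections, is upward closed (among
closed subspaces), and is such that whenever the closed linear span of a family of closed
subspaces belongs to `p`, some member of the family belongs to `p`. -/
theorem no_points_in_closed_subspace_lattice {H : Type*} [NormedAddCommGroup H]
    [InnerProductSpace ℂ H] [CompleteSpace H]
    (hdim : ∃ x y : H, LinearIndependent ℂ ![x, y]) :
    ¬ ∃ p : Set (Submodule ℂ H),
        (∀ U ∈ p, IsClosed (U : Set H)) ∧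
        p.Nonempty ∧
        (⊥ : Submodule ℂ H) ∉ p ∧
        (∀ U ∈ p, ∀ V ∈ p, U ⊓ V ∈ p) ∧
        (∀ U ∈ p, ∀ V : Submodule ℂ H, IsClosed (V : Set H) → U ≤ V → V ∈ p) ∧
        (∀ S : Set (Submodule ℂ H), (∀ U ∈ S, IsClosed (U : Set H)) →
          (sSup S).topologicalClosure ∈ p → ∃ U ∈ S, U ∈ p) := by
  rintro ⟨p, -, ⟨U₀, hU₀⟩, hbot, hinf, hup, hsup⟩
  obtain ⟨x, y, hxy⟩ := hdim
  rw [LinearIndependent.pair_iff] at hxy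
  have htop : (⊤ : Submodule ℂ H) ∈ p := hup U₀ hU₀ ⊤ (by simp) le_top
  have hcl : ∀ z : H, IsClosed ((Submodule.span ℂ {z} : Submodule ℂ H) : Set H) := fun z =>
    Submodule.closed_of_finiteDimensional _
  have key : ∀ T : Set H, (∀ u : H, u ∈ Submodule.span ℂ T) →
      ∃ z ∈ T, Submodule.span ℂ {z} ∈ p := by
    intro T hT
    have h := hsup ((fun z => Submodule.span ℂ {z}) '' T) (by
      rintro _ ⟨z, -, rfl⟩
      exact hcl z) (by
      have h1 : sSup ((fun z => Submodule.span ℂ {z}) '' T) = (⊤ : Submodule ℂ H) := by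
        rw [eq_top_iff]
        intro u _
        refine (Submodule.span_le.2 ?_) (hT u)
        intro z hz
        have h2 : Submodule.span ℂ {z} ≤ sSup ((fun z => Submodule.span ℂ {z}) '' T) :=
          le_sSup ⟨z, hz, rfl⟩
        exact h2 (Submodule.mem_span_singleton_self z)
      rw [h1, top_le_iff.1 (Submodule.le_topologicalClosure (⊤ : Submodule ℂ H))]
      exact htop)
    obtain ⟨_, ⟨z, hz, rfl⟩, hp⟩ := h
    exact ⟨z, hz, hp⟩
  obtain ⟨v, -, hv⟩ := key Set.univ (fun u => Submodule.subset_span (Set.mem_univ u))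
  have hw : ∃ w : H, w ∉ Submodule.span ℂ {v} := by
    by_contra hcon
    push Not at hcon
    obtain ⟨a, ha⟩ := Submodule.mem_span_singleton.1 (hcon x)
    obtain ⟨b, hb⟩ := Submodule.mem_span_singleton.1 (hcon y)
    have h1 := hxy b (-a) (by rw [← ha, ← hb]; module)
    have ha0 : a = 0 := by simpa using h1.2
    have h2 := hxy 1 0 (by rw [← ha, ha0]; simp)
    exact one_ne_zero h2.1
  obtain ⟨w, hw⟩ := hw
  obtain ⟨z, hz, hzp⟩ := key {z | z ∉ Submodule.span ℂ {v}} (by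
    intro u
    by_cases hu : u ∈ Submodule.span ℂ {v}
    · have h1 : u + w ∉ Submodule.span ℂ {v} := fun h =>
        hw (by simpa using Submodule.sub_mem _ h hu)
      have h2 := Submodule.sub_mem (Submodule.span ℂ {z | z ∉ Submodule.span ℂ {v}})
        (Submodule.subset_span h1) (Submodule.subset_span hw)
      simpa using h2
    · exact Submodule.subset_span hu)
  apply hbot
  have h0 : Submodule.span ℂ {z} ⊓ Submodule.span ℂ {v} = ⊥ := by
    rw [eq_bot_iff]
    rintro t ⟨ht1, ht2⟩
    obtain ⟨c, rfl⟩ := Submodule.mem_span_singleton.1 ht1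
    by_cases hc : c = 0
    · simp [hc]
    · exact absurd ((Submodule.smul_mem_iff _ hc).1 ht2) hz
  rw [← h0]
  exact hinf _ hzp _ hv
end

section
/- Let L be an orthomodular lattice and a, b ∈ L. If every quasipoint of L containing a also contains b (i.e. Q_a(L) ⊆ Q_b(L)), then a ≤ b. In particular, Q_a(L) = Q_b(L) implies a = b. -/
theorem aux_exists_quasipoint {L : Type*} [PartialOrder L] [OrderBot L] (c : L) (hc : c ≠ ⊥) :
    ∃ B : Set L, IsQuasipoint B ∧ c ∈ B := by
  have h0 : IsFilterBase ({c} : Set L) := by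
    refine ⟨⟨c, rfl⟩, fun h => hc (Set.mem_singleton_iff.1 h).symm, ?_⟩
    rintro x rfl y rfl
    exact ⟨_, rfl, le_rfl, le_rfl⟩
  obtain ⟨M, hM, hmax⟩ := zorn_subset_nonempty {B : Set L | IsFilterBase B} (by
    intro S hS hch hne
    refine ⟨⋃₀ S, ⟨?_, ?_, ?_⟩, fun s hs => Set.subset_sUnion_of_mem hs⟩
    · obtain ⟨s, hs⟩ := hne
      obtain ⟨x, hx⟩ := (hS hs).1
      exact ⟨x, s, hs, hx⟩
    · rintro ⟨s, hs, h⟩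
      exact (hS hs).2.1 h
    · rintro x ⟨s, hs, hx⟩ y ⟨t, ht, hy⟩
      rcases hch.total hs ht with h | h
      · obtain ⟨z, hz, h1⟩ := (hS ht).2.2 x (h hx) y hy
        exact ⟨z, ⟨t, ht, hz⟩, h1⟩
      · obtain ⟨z, hz, h1⟩ := (hS hs).2.2 x hx y (h hy)
        exact ⟨z, ⟨s, hs, hz⟩, h1⟩) {c} h0
  exact ⟨M, ⟨hmax.prop, fun C hC h => (hmax.eq_of_subset hC h).symm⟩, hM rfl⟩

theorem aux_upward {L : Type*} [PartialOrder L] [OrderBot L] {B : Set L} (hB : IsQuasipoint B)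
    {x y : L} (hx : x ∈ B) (hxy : x ≤ y) : y ∈ B := by
  have h : IsFilterBase {z : L | ∃ w ∈ B, w ≤ z} := by
    refine ⟨⟨x, x, hx, le_rfl⟩, ?_, ?_⟩
    · rintro ⟨w, hw, h⟩
      exact hB.1.2.1 (le_bot_iff.1 h ▸ hw)
    · rintro p ⟨u, hu, hp⟩ q ⟨v, hv, hq⟩
      obtain ⟨z, hz, h1, h2⟩ := hB.1.2.2 u hu v hv
      exact ⟨z, ⟨z, hz, le_rfl⟩, h1.trans hp, h2.trans hq⟩
  rw [← hB.2 _ h (fun z hz => ⟨z, hz, le_rfl⟩)]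
  exact ⟨x, hx, hxy⟩

theorem aux_le {L : Type*} [Lattice L] [BoundedOrder L]
    (oc : L → L)
    (h_inf_compl : ∀ a : L, a ⊓ oc a = ⊥)
    (h_compl_inf : ∀ a b : L, oc (a ⊓ b) = oc a ⊔ oc b)
    (h_compl_sup : ∀ a b : L, oc (a ⊔ b) = oc a ⊓ oc b)
    (h_compl_compl : ∀ a : L, oc (oc a) = a)
    (h_orthomodular : ∀ a b : L, b ≤ a → b = a ⊓ (oc a ⊔ b))
    (a b : L) (h : Qset a ⊆ Qset b) : a ≤ b := by
  by_cases hc : a ⊓ oc (a ⊓ b) = ⊥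
  · have h1 := congrArg oc (h_orthomodular a (a ⊓ b) inf_le_left)
    rw [h_compl_inf a (oc a ⊔ _), h_compl_sup, h_compl_compl, hc, sup_bot_eq] at h1
    have h2 := congrArg oc h1
    rw [h_compl_compl, h_compl_compl] at h2
    exact inf_eq_left.1 h2
  · exfalso
    obtain ⟨B, hB, hcB⟩ := aux_exists_quasipoint _ hc
    have ha : a ∈ B := aux_upward hB hcB inf_le_left
    have hb : b ∈ B := @h ⟨B, hB⟩ ha
    obtain ⟨d, hd, h1, h2⟩ := hB.1.2.2 _ hcB _ hb
    have h3 : d ≤ (a ⊓ b) ⊓ oc (a ⊓ b) :=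
      le_inf (le_inf (h1.trans inf_le_left) h2) (h1.trans inf_le_right)
    rw [h_inf_compl] at h3
    exact hB.1.2.1 (le_bot_iff.1 h3 ▸ hd)

/-- In an orthomodular lattice, if every quasipoint containing `a` also contains `b`,
then `a ≤ b`; in particular `Qset a = Qset b` implies `a = b`. -/
theorem qset_subset_imp_le {L : Type*} [Lattice L] [BoundedOrder L]
    (oc : L → L)
    (h_inf_compl : ∀ a : L, a ⊓ oc a = ⊥)
    (h_sup_compl : ∀ a : L, a ⊔ oc a = ⊤)
    (h_compl_inf : ∀ a b : L, oc (a ⊓ b) = oc a ⊔ oc b)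
    (h_compl_sup : ∀ a b : L, oc (a ⊔ b) = oc a ⊓ oc b)
    (h_compl_compl : ∀ a : L, oc (oc a) = a)
    (h_orthomodular : ∀ a b : L, b ≤ a → b = a ⊓ (oc a ⊔ b))
    (a b : L) :
    (Qset a ⊆ Qset b → a ≤ b) ∧ (Qset a = Qset b → a = b) := by
  have key := aux_le oc h_inf_compl h_compl_inf h_compl_sup h_compl_compl h_orthomodular
  exact ⟨key a b, fun h => le_antisymm (key a b h.subset) (key b a h.symm.subset)⟩
end

section
/- Let M be a locally compact Hausdorff space and B a quasipoint of the lattice T(M) of open subsets of M. Then either M \ K ∈ B for every compact subset K of M, or there exists a unique x ∈ M such that ⋂_{U ∈ B} cl(U) = {x}, where cl(U) denotes the closure of U; in the second case every open neighbourhood of x belongs to B. -/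
open TopologicalSpace

theorem quasi_mem_aux {M : Type*} [TopologicalSpace M] {B : Set (Opens M)} (hB : IsQuasipoint B)
    (W : Opens M) (h : ∀ U ∈ B, ((U : Set M) ∩ W).Nonempty) : W ∈ B := by
  obtain ⟨⟨⟨U0, hU0⟩, hbot, hdir⟩, hmax⟩ := hB
  have hC := hmax {V | ∃ U ∈ B, U ⊓ W ≤ V} ?_ ?_
  · rw [← hC]
    exact ⟨U0, hU0, inf_le_right⟩
  · refine ⟨⟨W, U0, hU0, inf_le_right⟩, ?_, ?_⟩
    · rintro ⟨U, hU, hle⟩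
      obtain ⟨y, hy⟩ := h U hU
      exact hle hy
    · rintro a ⟨U, hU, ha⟩ b ⟨V, hV, hb⟩
      obtain ⟨c, hc, hcU, hcV⟩ := hdir U hU V hV
      exact ⟨c ⊓ W, ⟨c, hc, le_rfl⟩, (inf_le_inf_right W hcU).trans ha,
        (inf_le_inf_right W hcV).trans hb⟩
  · intro U hU
    exact ⟨U, hU, inf_le_left⟩

/-- Let `M` be a locally compact Hausdorff space and `B` a quasipoint of the lattice of open
subsets of `M`. Then either `M \ K ∈ B` for every compact `K ⊆ M`, or there is a unique `x ∈ M`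
with `⋂_{U ∈ B} cl U = {x}`, and in that case every open neighbourhood of `x` belongs to `B`. -/
theorem quasipoint_opens_dichotomy {M : Type*} [TopologicalSpace M] [T2Space M]
    [LocallyCompactSpace M] (B : Set (Opens M)) (hB : IsQuasipoint B) :
    (∀ K : Set M, (hK : IsCompact K) →
        (⟨Kᶜ, hK.isClosed.isOpen_compl⟩ : Opens M) ∈ B) ∨
    (∃! x : M, (⋂ U ∈ B, closure (U : Set M)) = {x} ∧
        ∀ V : Opens M, x ∈ V → V ∈ B) := by
  have hfb := hB.1
  obtain ⟨⟨U1, hU1⟩, hbot, hdir⟩ := hfb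
  have hne : ∀ a ∈ B, ∀ b ∈ B, ((a : Set M) ∩ b).Nonempty := by
    intro a ha b hb
    obtain ⟨c, hc, hca, hcb⟩ := hdir a ha b hb
    have : (c : Set M).Nonempty := by
      rw [Set.nonempty_iff_ne_empty]
      intro he
      have hcb' : c = ⊥ := Opens.ext he
      exact hbot (hcb' ▸ hc)
    obtain ⟨y, hy⟩ := this
    exact ⟨y, hca hy, hcb hy⟩
  by_cases hall : ∀ K : Set M, (hK : IsCompact K) →
        (⟨Kᶜ, hK.isClosed.isOpen_compl⟩ : Opens M) ∈ B
  · exact Or.inl hall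
  right
  push Not at hall
  obtain ⟨K, hK, hKB⟩ := hall
  have h0 : ∃ U ∈ B, (U : Set M) ⊆ K := by
    by_contra hcon
    push Not at hcon
    refine hKB (quasi_mem_aux hB _ fun U hU => ?_)
    obtain ⟨y, hy, hyK⟩ := Set.not_subset.1 (hcon U hU)
    exact ⟨y, hy, hyK⟩
  obtain ⟨U0, hU0, hU0K⟩ := h0
  have hx : ∃ x : M, ∀ U ∈ B, x ∈ closure (U : Set M) := by
    by_contra hcon
    push Not at hcon
    have : ∃ U ∈ B, Disjoint (U : Set M) K := by
      refine hK.induction_on (p := fun s => ∃ U ∈ B, Disjoint (U : Set M) s) ?_ ?_ ?_ ?_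
      · exact ⟨U1, hU1, Set.disjoint_empty _⟩
      · rintro s t hst ⟨U, hU, hd⟩
        exact ⟨U, hU, hd.mono_right hst⟩
      · rintro s t ⟨U, hU, hs⟩ ⟨V, hV, ht⟩
        obtain ⟨c, hc, hcU, hcV⟩ := hdir U hU V hV
        exact ⟨c, hc, Set.disjoint_union_right.2 ⟨hs.mono_left hcU, ht.mono_left hcV⟩⟩
      · intro x _
        obtain ⟨U, hU, hxU⟩ := hcon x
        refine ⟨(closure (U : Set M))ᶜ, mem_nhdsWithin_of_mem_nhds
          (isClosed_closure.isOpen_compl.mem_nhds hxU), U, hU, ?_⟩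
        exact Set.disjoint_compl_right_iff_subset.2 subset_closure
    obtain ⟨U, hU, hd⟩ := this
    obtain ⟨y, hy, hy0⟩ := hne U hU U0 hU0
    exact Set.disjoint_left.1 hd hy (hU0K hy0)
  have hnb : ∀ x : M, (∀ U ∈ B, x ∈ closure (U : Set M)) → ∀ V : Opens M, x ∈ V → V ∈ B := by
    intro x hx V hxV
    refine quasi_mem_aux hB V fun U hU => ?_
    rw [Set.inter_comm]
    exact mem_closure_iff.1 (hx U hU) V V.isOpen hxV
  obtain ⟨x, hx⟩ := hx
  have huniq : ∀ y : M, (∀ U ∈ B, y ∈ closure (U : Set M)) → y = x := by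
    intro y hy
    by_contra hyx
    obtain ⟨u, v, hu, hv, hyu, hxv, hd⟩ := t2_separation hyx
    obtain ⟨z, hz1, hz2⟩ := hne _ (hnb y hy ⟨u, hu⟩ hyu) _ (hnb x hx ⟨v, hv⟩ hxv)
    exact Set.disjoint_left.1 hd hz1 hz2
  refine ⟨x, ⟨?_, hnb x hx⟩, ?_⟩
  · ext y
    simp only [Set.mem_iInter, Set.mem_singleton_iff]
    exact ⟨huniq y, fun h => h ▸ hx⟩
  · rintro y ⟨hy, -⟩
    apply huniq
    have : y ∈ (⋂ U ∈ B, closure (U : Set M)) := by rw [hy]; rfl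
    simpa only [Set.mem_iInter] using this
end

section
/- Let M be a Hausdorff topological space that is first countable and Lindelöf, and let B(M) be the σ-algebra of Borel subsets of M. A nonempty set p of Borel subsets of M is a σ-point of B(M) — meaning (1) ∅ ∉ p; (2) A, B ∈ p implies A ∩ B ∈ p; (3) if A ∈ p, B is Borel and A ⊆ B then B ∈ p; (4) whenever a countable union of Borel sets belongs to p, some member of the sequence belongs to p — if and only if there exists x ∈ M such that p = {A Borel : x ∈ A}. -/
/-- Let `M` be a Hausdorff, first countable, Lindelöf topological space, and let `p` be a
nonempty collection of Borel subsets of `M`. Then `p` is a σ-point of the Borel σ-algebra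
(avoids `∅`, is closed under binary intersections, is upward closed among Borel sets, and
whenever a countable union of Borel sets belongs to `p` some member of the sequence belongs
to `p`) if and only if `p = {A Borel : x ∈ A}` for some `x ∈ M`. -/
theorem sigma_point_of_borel_iff_principal {M : Type*} [TopologicalSpace M] [T2Space M]
    [FirstCountableTopology M] [LindelofSpace M] [MeasurableSpace M] [BorelSpace M]
    (p : Set (Set M)) (hBorel : ∀ A ∈ p, MeasurableSet A) (hne : p.Nonempty) :
    ((∅ : Set M) ∉ p ∧
     (∀ A ∈ p, ∀ B ∈ p, A ∩ B ∈ p) ∧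
     (∀ A ∈ p, ∀ B : Set M, MeasurableSet B → A ⊆ B → B ∈ p) ∧
     (∀ f : ℕ → Set M, (∀ n, MeasurableSet (f n)) → (⋃ n, f n) ∈ p → ∃ n, f n ∈ p)) ↔
    ∃ x : M, p = {A : Set M | MeasurableSet A ∧ x ∈ A} := by
  constructor
  · rintro ⟨h0, hI, hU, hS⟩
    have huniv : (Set.univ : Set M) ∈ p := by
      obtain ⟨A, hA⟩ := hne
      exact hU A hA _ MeasurableSet.univ (Set.subset_univ _)
    have hx : ∃ x : M, ∀ U : Set M, IsOpen U → x ∈ U → U ∈ p := by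
      by_contra hcon
      push Not at hcon
      choose U hUo hxU hUp using hcon
      obtain ⟨t, htc, ht⟩ := LindelofSpace.elim_nhds_subcover U
        (fun x => (hUo x).mem_nhds (hxU x))
      rcases t.eq_empty_or_nonempty with rfl | htn
      · apply h0
        have h1 : (∅ : Set M) = Set.univ := by simpa using ht
        rw [h1]
        exact huniv
      · obtain ⟨g, rfl⟩ := htc.exists_eq_range htn
        have h1 : (⋃ n, U (g n)) = Set.univ := by simpa using ht
        obtain ⟨n, hn⟩ := hS (fun n => U (g n)) (fun n => (hUo _).measurableSet)
          (by rw [h1]; exact huniv)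
        exact hUp _ hn
    obtain ⟨x, hx⟩ := hx
    obtain ⟨V, hV, -⟩ := (nhds x).exists_antitone_basis
    have hsing : ({x} : Set M) ∈ p := by
      have hcov : (⋃ n : ℕ, Nat.casesOn (motive := fun _ => Set M) n {x}
          (fun k => (interior (V k))ᶜ)) = Set.univ := by
        rw [Set.eq_univ_iff_forall]
        intro y
        rw [Set.mem_iUnion]
        by_cases hy : y = x
        · exact ⟨0, hy⟩
        · have h1 : ({y}ᶜ : Set M) ∈ nhds x :=
            isOpen_compl_singleton.mem_nhds (fun h => hy (Eq.symm h))
          obtain ⟨k, -, hk⟩ := hV.mem_iff.1 h1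
          exact ⟨k + 1, fun h => hk (interior_subset h) rfl⟩
      obtain ⟨n, hn⟩ := hS _ (by
        intro n
        cases n with
        | zero => exact measurableSet_singleton x
        | succ k => exact isOpen_interior.measurableSet.compl) (hcov ▸ huniv)
      cases n with
      | zero => exact hn
      | succ k =>
        exfalso
        have h1 := hx (interior (V k)) isOpen_interior
          (mem_interior_iff_mem_nhds.2 (hV.mem_of_mem trivial))
        have h2 := hI _ h1 _ hn
        rw [Set.inter_compl_self] at h2
        exact h0 h2
    refine ⟨x, Set.ext fun A => ⟨fun hA => ⟨hBorel A hA, ?_⟩, fun hA => ?_⟩⟩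
    · by_contra hxA
      have h2 := hI _ hA _ hsing
      rw [Set.inter_singleton_eq_empty.2 hxA] at h2
      exact h0 h2
    · exact hU _ hsing A hA.1 (Set.singleton_subset_iff.2 hA.2)
  · rintro ⟨x, rfl⟩
    refine ⟨fun h => h.2, fun A hA B hB => ⟨hA.1.inter hB.1, hA.2, hB.2⟩,
      fun A hA B hB hAB => ⟨hB, hAB hA.2⟩, fun f hf h => ?_⟩
    obtain ⟨n, hn⟩ := Set.mem_iUnion.1 h.2
    exact ⟨n, hf n, hn⟩
end

section
/- Let M be a topological space and let J be a proper dual ideal in the lattice T(M) of open subsets of M (i.e. ∅ ∉ J, J is closed under binary intersection, and U ∈ J together with U ⊆ V open implies V ∈ J). Then J is a quasipoint of T(M) if and only if for every open U ⊆ M, either U ∈ J or U^c ∈ J, where U^c := M \ cl(U) is the pseudocomplement of U (the complement of the closure of U). -/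
open TopologicalSpace

/-- A proper dual ideal `J` in the lattice of open subsets of a topological space `M` is a
quasipoint iff for every open `U`, either `U ∈ J` or the pseudocomplement
`U^c = M \ cl U` belongs to `J`. -/
theorem dualIdeal_opens_quasipoint_iff_pseudocomplement_alternative
    {M : Type*} [TopologicalSpace M] (J : Set (Opens M))
    (hne : J.Nonempty) (hbot : (⊥ : Opens M) ∉ J)
    (hinf : ∀ U ∈ J, ∀ V ∈ J, U ⊓ V ∈ J)
    (hup : ∀ U ∈ J, ∀ V : Opens M, U ≤ V → V ∈ J) :
    IsQuasipoint J ↔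
      ∀ U : Opens M,
        U ∈ J ∨ (⟨(closure (U : Set M))ᶜ, isClosed_closure.isOpen_compl⟩ : Opens M) ∈ J := by
  constructor
  · rintro ⟨_, hmax⟩ U
    by_cases h : ∃ V ∈ J, V ⊓ U = ⊥
    · right
      obtain ⟨V, hV, hVU⟩ := h
      refine hup V hV _ ?_
      intro x hx hxc
      obtain ⟨y, hy⟩ := mem_closure_iff.1 hxc (V : Set M) V.isOpen hx
      have h2 : y ∈ V ⊓ U := hy
      rw [hVU] at h2
      exact h2
    · left
      have hC : IsFilterBase {W : Opens M | ∃ V ∈ J, V ⊓ U ≤ W} := by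
        refine ⟨?_, ?_, ?_⟩
        · obtain ⟨V, hV⟩ := hne
          exact ⟨V, V, hV, inf_le_left⟩
        · rintro ⟨V, hV, hle⟩
          exact h ⟨V, hV, le_bot_iff.1 hle⟩
        · rintro a ⟨V, hV, ha⟩ b ⟨W, hW, hb⟩
          exact ⟨V ⊓ W ⊓ U, ⟨V ⊓ W, hinf V hV W hW, le_rfl⟩,
            (inf_le_inf_right U inf_le_left).trans ha,
            (inf_le_inf_right U inf_le_right).trans hb⟩
      rw [← hmax _ hC (fun V hV => ⟨V, hV, inf_le_left⟩)]
      obtain ⟨V, hV⟩ := hne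
      exact ⟨V, hV, inf_le_right⟩
  · intro h
    refine ⟨⟨hne, hbot, fun a ha b hb => ⟨a ⊓ b, hinf a ha b hb, inf_le_left, inf_le_right⟩⟩, ?_⟩
    rintro C ⟨_, hCb, hC⟩ hJC
    refine Set.Subset.antisymm (fun U hU => ?_) hJC
    rcases h U with h1 | h1
    · exact h1
    · exfalso
      obtain ⟨c, hc, hcU, hcc⟩ := hC U hU _ (hJC h1)
      have : c = ⊥ := by
        rw [← le_bot_iff]
        intro x hx
        exact absurd (subset_closure (hcU hx)) (hcc hx)
      exact hCb (this ▸ hc)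
end

section
/- Let H be a complex Hilbert space of dimension greater than one. Then the Stone spectrum Q(L(H)) of the lattice L(H) of closed subspaces of H is not compact. If moreover H is infinite-dimensional, then Q(L(H)) is not locally compact. -/
/-- The lattice of closed subspaces of a Hilbert space, ordered by inclusion. -/
def ClosedSubspace (H : Type*) [NormedAddCommGroup H] [InnerProductSpace ℂ H] : Type _ :=
  {K : Submodule ℂ H // IsClosed (K : Set H)}

instance {H : Type*} [NormedAddCommGroup H] [InnerProductSpace ℂ H] :
    PartialOrder (ClosedSubspace H) :=
  inferInstanceAs (PartialOrder {K : Submodule ℂ H // IsClosed (K : Set H)})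

instance {H : Type*} [NormedAddCommGroup H] [InnerProductSpace ℂ H] :
    OrderBot (ClosedSubspace H) where
  bot := ⟨⊥, by simpa using (isClosed_singleton : IsClosed ({0} : Set H))⟩
  bot_le K := show (⊥ : Submodule ℂ H) ≤ K.1 from bot_le

section Aux

variable {H : Type*} [NormedAddCommGroup H] [InnerProductSpace ℂ H]

theorem closedSubspace_eq_bot {a : ClosedSubspace H} (h : ∀ x ∈ a.1, x = 0) : a = ⊥ :=
  Subtype.ext ((Submodule.eq_bot_iff a.1).2 h)

theorem closedSubspace_mem_bot {x : H} (h : x ∈ (⊥ : ClosedSubspace H).1) : x = 0 :=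
  (Submodule.mem_bot ℂ).1 h

/-- Intersection of closed subspaces. -/
def csInf (a b : ClosedSubspace H) : ClosedSubspace H := ⟨a.1 ⊓ b.1, a.2.inter b.2⟩

theorem csInf_le_left (a b : ClosedSubspace H) : csInf a b ≤ a :=
  show a.1 ⊓ b.1 ≤ a.1 from inf_le_left

theorem csInf_le_right (a b : ClosedSubspace H) : csInf a b ≤ b :=
  show a.1 ⊓ b.1 ≤ b.1 from inf_le_right

theorem le_csInfAux {a b c : ClosedSubspace H} (h : c ≤ a) (h' : c ≤ b) : c ≤ csInf a b :=
  show c.1 ≤ a.1 ⊓ b.1 from le_inf h h'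

/-- The line spanned by a vector. -/
def csSpan (x : H) : ClosedSubspace H :=
  ⟨Submodule.span ℂ {x}, Submodule.closed_of_finiteDimensional _⟩

theorem isQuasipoint_upper {L : Type*} [PartialOrder L] [OrderBot L] {B : Set L}
    (hB : IsQuasipoint B) {c a : L} (hc : c ∈ B) (h : c ≤ a) : a ∈ B := by
  have hC : IsFilterBase {d | ∃ b ∈ B, b ≤ d} := by
    refine ⟨⟨c, c, hc, le_rfl⟩, ?_, ?_⟩
    · rintro ⟨b, hb, hb'⟩
      exact hB.1.2.1 (le_bot_iff.1 hb' ▸ hb)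
    · rintro d ⟨b, hb, hbd⟩ d' ⟨b', hb', hbd'⟩
      obtain ⟨e, he, h1, h2⟩ := hB.1.2.2 b hb b' hb'
      exact ⟨e, ⟨e, he, le_rfl⟩, h1.trans hbd, h2.trans hbd'⟩
  rw [← hB.2 _ hC fun b hb => ⟨b, hb, le_rfl⟩]
  exact ⟨c, hc, h⟩

theorem exists_csInf_eq_bot {B : Set (ClosedSubspace H)} (hB : IsQuasipoint B)
    {a : ClosedSubspace H} (ha : a ∉ B) : ∃ b ∈ B, csInf a b = ⊥ := by
  by_contra! hne
  apply ha
  have hC : IsFilterBase {d | ∃ b ∈ B, csInf a b ≤ d} := by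
    obtain ⟨c, hc⟩ := hB.1.1
    refine ⟨⟨csInf a c, c, hc, le_rfl⟩, ?_, ?_⟩
    · rintro ⟨b, hb, hb'⟩
      exact hne b hb (le_bot_iff.1 hb')
    · rintro d ⟨b, hb, hbd⟩ d' ⟨b', hb', hbd'⟩
      obtain ⟨e, he, h1, h2⟩ := hB.1.2.2 b hb b' hb'
      exact ⟨csInf a e, ⟨e, he, le_rfl⟩,
        (le_csInfAux (csInf_le_left a e) ((csInf_le_right a e).trans h1)).trans hbd,
        (le_csInfAux (csInf_le_left a e) ((csInf_le_right a e).trans h2)).trans hbd'⟩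
  rw [← hB.2 _ hC fun b hb => ⟨b, hb, csInf_le_right a b⟩]
  obtain ⟨c, hc⟩ := hB.1.1
  exact ⟨c, hc, csInf_le_left a c⟩

theorem isQuasipoint_vector {x : H} (hx : x ≠ 0) :
    IsQuasipoint {d : ClosedSubspace H | x ∈ d.1} := by
  refine ⟨⟨⟨csSpan x, Submodule.mem_span_singleton_self x⟩,
    fun h => hx (closedSubspace_mem_bot h), fun a ha b hb =>
      ⟨csInf a b, ⟨ha, hb⟩, csInf_le_left a b, csInf_le_right a b⟩⟩, ?_⟩
  intro C hC hsub
  refine Set.Subset.antisymm (fun d hd => ?_) hsub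
  obtain ⟨e, he, h1, h2⟩ := hC.2.2 d hd (csSpan x) (hsub (Submodule.mem_span_singleton_self x))
  by_contra hxd
  have : e = ⊥ := by
    apply closedSubspace_eq_bot
    intro y hy
    obtain ⟨r, rfl⟩ := Submodule.mem_span_singleton.1 (h2 hy)
    by_cases hr : r = 0
    · simp [hr]
    · exact absurd ((Submodule.smul_mem_iff d.1 hr).1 (h1 hy)) hxd
  exact hC.2.1 (this ▸ he)

theorem le_span_of_compact {K : Set (Quasipoint (ClosedSubspace H))} (hK : IsCompact K)
    {c : ClosedSubspace H} (hc : Qset c ⊆ K) {x : H} (hx : x ≠ 0) (hxc : x ∈ c.1) :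
    c.1 ≤ Submodule.span ℂ {x} := by
  obtain ⟨t, ht, htf, hcov⟩ := hK.elim_finite_subcover_image
    (b := {d : ClosedSubspace H | d = csSpan x ∨ csInf (csSpan x) d = ⊥}) (c := Qset)
    (fun i _ => TopologicalSpace.isOpen_generateFrom_of_mem ⟨i, rfl⟩) (by
      intro B _
      simp only [Set.mem_iUnion]
      by_cases h : csSpan x ∈ B.1
      · exact ⟨_, Or.inl rfl, h⟩
      · obtain ⟨b, hb, hb'⟩ := exists_csInf_eq_bot B.2 h
        exact ⟨b, Or.inr hb', hb⟩)
  have hfin : Finite t := htf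
  obtain ⟨_ | d, hdt⟩ := Subspace.exists_eq_top_of_iUnion_eq_univ
    (p := fun i : Option t => match i with
      | none => (⊥ : Submodule ℂ c.1)
      | some i => i.1.1.comap c.1.subtype) (by
      rw [Set.eq_univ_iff_forall]
      rintro ⟨y, hy⟩
      by_cases hy0 : y = 0
      · exact Set.mem_iUnion.2 ⟨none, by simp [hy0]⟩
      · have hmem : (Subtype.mk _ (isQuasipoint_vector hy0) : Quasipoint (ClosedSubspace H)) ∈ Qset c := hy
        obtain ⟨d, hd, hyd⟩ := Set.mem_iUnion₂.1 (hcov (hc hmem))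
        exact Set.mem_iUnion.2 ⟨some ⟨d, hd⟩, hyd⟩)
  · have : (⟨x, hxc⟩ : c.1) ∈ (⊥ : Submodule ℂ c.1) := by
      have h2 : (⊥ : Submodule ℂ c.1) = ⊤ := by assumption
      rw [h2]; trivial
    exact absurd (congrArg Subtype.val ((Submodule.mem_bot ℂ).1 this)) hx
  · have hle : c.1 ≤ d.1.1 := by
      intro y hy
      have h3 : (⟨y, hy⟩ : c.1) ∈ d.1.1.comap c.1.subtype := by
        have h2 : d.1.1.comap c.1.subtype = ⊤ := by assumption
        rw [h2]; trivial
      exact h3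
    rcases ht d.2 with h | h
    · rw [h] at hle
      exact hle
    · have : x ∈ (csInf (csSpan x) d.1).1 := ⟨Submodule.mem_span_singleton_self x, hle hxc⟩
      rw [h] at this
      exact absurd (closedSubspace_mem_bot this) hx

theorem exists_Qset_subset {L : Type*} [PartialOrder L] [OrderBot L] {U : Set (Quasipoint L)}
    (hU : IsOpen U) : ∀ B ∈ U, ∃ c ∈ B.1, Qset c ⊆ U := by
  have hU' : TopologicalSpace.GenerateOpen (Set.range (Qset : L → Set (Quasipoint L))) U := hU
  induction hU' with
  | basic s hs =>
    obtain ⟨a, rfl⟩ := hs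
    exact fun B hB => ⟨a, hB, subset_rfl⟩
  | univ =>
    intro B _
    obtain ⟨c, hc⟩ := B.2.1.1
    exact ⟨c, hc, Set.subset_univ _⟩
  | inter s t hs ht ihs iht =>
    rintro B ⟨h1, h2⟩
    obtain ⟨c, hc, hcs⟩ := ihs hs B h1
    obtain ⟨d, hd, hdt⟩ := iht ht B h2
    obtain ⟨e, he, hec, hed⟩ := B.2.1.2.2 c hc d hd
    exact ⟨e, he, fun C hC => ⟨hcs (isQuasipoint_upper C.2 hC hec),
      hdt (isQuasipoint_upper C.2 hC hed)⟩⟩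
  | sUnion S hS ih =>
    rintro B ⟨s, hs, hB⟩
    obtain ⟨c, hc, hcs⟩ := ih s hs (hS s hs) B hB
    exact ⟨c, hc, hcs.trans (Set.subset_sUnion_of_mem hs)⟩

theorem exists_quasipoint_extending {L : Type*} [PartialOrder L] [OrderBot L] {F : Set L}
    (hF : IsFilterBase F) : ∃ B : Set L, IsQuasipoint B ∧ F ⊆ B := by
  obtain ⟨m, hm, hmax⟩ := zorn_subset_nonempty {B : Set L | IsFilterBase B} (by
    intro c hc hchain hne
    refine ⟨⋃₀ c, ⟨?_, ?_, ?_⟩, fun s hs => Set.subset_sUnion_of_mem hs⟩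
    · obtain ⟨s, hs⟩ := hne
      obtain ⟨a, ha⟩ := (hc hs).1
      exact ⟨a, s, hs, ha⟩
    · rintro ⟨s, hs, hb⟩
      exact (hc hs).2.1 hb
    · rintro a ⟨s, hs, ha⟩ b ⟨t, ht, hb⟩
      rcases hchain.total hs ht with h | h
      · obtain ⟨e, he, h'⟩ := (hc ht).2.2 a (h ha) b hb
        exact ⟨e, ⟨t, ht, he⟩, h'⟩
      · obtain ⟨e, he, h'⟩ := (hc hs).2.2 a ha b (h hb)
        exact ⟨e, ⟨s, hs, he⟩, h'⟩) F hF
  exact ⟨m, ⟨hmax.1, fun C hC h => Set.Subset.antisymm (hmax.2 hC h) h⟩, hm⟩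

theorem isFilterBase_cofinite (hinf : ¬ FiniteDimensional ℂ H) :
    IsFilterBase {a : ClosedSubspace H |
      ∃ F : Submodule ℂ H, FiniteDimensional ℂ F ∧ a.1 = Fᗮ} := by
  refine ⟨⟨⟨(⊥ : Submodule ℂ H)ᗮ, Submodule.isClosed_orthogonal _⟩, ⊥, inferInstance, rfl⟩, ?_, ?_⟩
  · rintro ⟨F, hF, h⟩
    have h' : Fᗮ = ⊥ := h.symm
    rw [Submodule.orthogonal_eq_bot_iff] at h'
    subst h'
    exact hinf (Module.Finite.equiv (Submodule.topEquiv (R := ℂ) (M := H)))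
  · rintro a ⟨F, hF, ha⟩ b ⟨G, hG, hb⟩
    refine ⟨csInf a b, ⟨F ⊔ G, inferInstance, ?_⟩, csInf_le_left a b, csInf_le_right a b⟩
    rw [← Submodule.inf_orthogonal, ← ha, ← hb]
    rfl

end Aux

/-- If `dim H > 1`, the Stone spectrum of the lattice of closed subspaces of `H` is not compact;
if moreover `H` is infinite-dimensional, it is not even locally compact. -/
theorem stoneSpectrum_closedSubspace_not_compact {H : Type*} [NormedAddCommGroup H]
    [InnerProductSpace ℂ H] [CompleteSpace H]
    (hdim : ∃ x y : H, LinearIndependent ℂ ![x, y]) :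
    ¬ CompactSpace (Quasipoint (ClosedSubspace H)) ∧
    (¬ FiniteDimensional ℂ H → ¬ LocallyCompactSpace (Quasipoint (ClosedSubspace H))) := by

  constructor
  · intro hcomp
    obtain ⟨x, y, hxy⟩ := hdim
    have hx : x ≠ 0 := hxy.ne_zero 0
    have := le_span_of_compact (isCompact_univ (X := Quasipoint (ClosedSubspace H)))
      (c := ⟨⊤, isClosed_univ⟩) (Set.subset_univ _) hx trivial
    obtain ⟨r, hr⟩ := Submodule.mem_span_singleton.1 (this (x := y) trivial)
    exact (LinearIndependent.pair_iff' hx).1 hxy r hr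
  · intro hinf hloc
    obtain ⟨B, hB, hFB⟩ := exists_quasipoint_extending (isFilterBase_cofinite hinf)
    obtain ⟨K, hK, hKB⟩ := exists_compact_mem_nhds (X := Quasipoint (ClosedSubspace H)) ⟨B, hB⟩
    obtain ⟨U, hUK, hU, hBU⟩ := mem_nhds_iff.1 hKB
    obtain ⟨c, hcB, hcU⟩ := exists_Qset_subset hU _ hBU
    have hc0 : c ≠ ⊥ := fun h => hB.1.2.1 (h ▸ hcB)
    obtain ⟨x, hxc, hx⟩ : ∃ x ∈ c.1, x ≠ 0 := by
      by_contra! h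
      exact hc0 (closedSubspace_eq_bot h)
    have hle := le_span_of_compact hK (hcU.trans hUK) hx hxc
    obtain ⟨d, hd, h1, h2⟩ := hB.1.2.2 c hcB
      ⟨(Submodule.span ℂ {x})ᗮ, Submodule.isClosed_orthogonal _⟩
      (hFB ⟨Submodule.span ℂ {x}, inferInstance, rfl⟩)
    have : d = ⊥ := by
      apply closedSubspace_eq_bot
      intro y hy
      have hz : y ∈ Submodule.span ℂ {x} ⊓ (Submodule.span ℂ {x})ᗮ := ⟨hle (h1 hy), h2 hy⟩
      rw [Submodule.inf_orthogonal_eq_bot] at hz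
      exact (Submodule.mem_bot ℂ).1 hz
    exact hB.1.2.1 (this ▸ hd)
end

section
/- Let M be a Baire topological space and let B be a quasipoint of the lattice T(M) of open subsets of M. Then the set C(B) := {A ⊆ M : A is a Borel set and there exists U ∈ B with the symmetric difference A Δ U meagre in M} is a quasipoint of the lattice B(M) of Borel subsets of M, and C(B) contains no meagre set (C(B) ∩ I₁ = ∅, where I₁ is the collection of meagre Borel sets). -/
open TopologicalSpace

/-- The lattice of Borel subsets of `M`, ordered by inclusion. -/
def BorelSet (M : Type*) [MeasurableSpace M] : Type _ :=
  {A : Set M // MeasurableSet A}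

instance {M : Type*} [MeasurableSpace M] : PartialOrder (BorelSet M) :=
  inferInstanceAs (PartialOrder {A : Set M // MeasurableSet A})

instance {M : Type*} [MeasurableSpace M] : OrderBot (BorelSet M) where
  bot := ⟨∅, MeasurableSet.empty⟩
  bot_le A := show (∅ : Set M) ⊆ A.1 from Set.empty_subset _

theorem aux_mem_quasipoint {M : Type*} [TopologicalSpace M] {B : Set (Opens M)}
    (hB : IsQuasipoint B) (U : Opens M) (h : ∀ V ∈ B, ((U : Set M) ∩ V).Nonempty) : U ∈ B := by
  obtain ⟨⟨⟨V0, hV0⟩, hbot, hinf⟩, hmax⟩ := hB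
  have key := hmax {W : Opens M | ∃ V ∈ B, U ⊓ V ≤ W} ?_ ?_
  · rw [← key]
    exact ⟨V0, hV0, inf_le_left⟩
  · refine ⟨⟨U, V0, hV0, inf_le_left⟩, ?_, ?_⟩
    · rintro ⟨V, hV, hle⟩
      obtain ⟨x, hx⟩ := h V hV
      exact hle hx
    · rintro a ⟨V, hV, hVa⟩ b ⟨W, hW, hWb⟩
      obtain ⟨c, hc, hcV, hcW⟩ := hinf V hV W hW
      exact ⟨U ⊓ c, ⟨c, hc, le_rfl⟩, (inf_le_inf_left U hcV).trans hVa,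
        (inf_le_inf_left U hcW).trans hWb⟩
  · intro V hV
    exact ⟨V, hV, inf_le_right⟩

/-- Let `M` be a Baire space and `B` a quasipoint of the lattice of open subsets of `M`. Then
`C(B) = {A Borel : A Δ U is meagre for some U ∈ B}` is a quasipoint of the lattice of Borel
subsets of `M` containing no meagre set. -/
theorem quasipoint_of_baire_quasipoint {M : Type*} [TopologicalSpace M] [BaireSpace M]
    [MeasurableSpace M] [BorelSpace M] (B : Set (Opens M)) (hB : IsQuasipoint B) :
    IsQuasipoint {A : BorelSet M | ∃ U ∈ B, IsMeagre (symmDiff (A.1 : Set M) (U : Set M))} ∧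
    ∀ A ∈ {A : BorelSet M | ∃ U ∈ B, IsMeagre (symmDiff (A.1 : Set M) (U : Set M))},
      ¬ IsMeagre (A.1 : Set M) := by
  have hnm : ∀ A ∈ {A : BorelSet M | ∃ U ∈ B, IsMeagre (symmDiff (A.1 : Set M) (U : Set M))},
      ¬ IsMeagre (A.1 : Set M) := by
    rintro A ⟨U, hU, hm⟩ hA
    have hne : (U : Set M).Nonempty := by
      by_contra hne
      have : U = ⊥ := by
        ext1
        simpa using Set.not_nonempty_iff_eq_empty.1 hne
      exact hB.1.2.1 (this ▸ hU)
    refine not_isMeagre_of_isOpen U.isOpen hne ((hA.union hm).mono ?_)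
    intro x hx
    by_cases hxA : x ∈ A.1
    · exact Or.inl hxA
    · exact Or.inr (Or.inr ⟨hx, hxA⟩)
  refine ⟨⟨⟨?_, ?_, ?_⟩, ?_⟩, hnm⟩
  · obtain ⟨U, hU⟩ := hB.1.1
    refine ⟨⟨U, U.isOpen.measurableSet⟩, U, hU, ?_⟩
    simpa using IsMeagre.empty
  · intro hbot
    exact hnm _ hbot IsMeagre.empty
  · rintro A ⟨U, hU, hA⟩ A' ⟨U', hU', hA'⟩
    obtain ⟨V, hV, hVU, hVU'⟩ := hB.1.2.2 U hU U' hU'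
    refine ⟨⟨A.1 ∩ A'.1 ∩ V, (A.2.inter A'.2).inter V.isOpen.measurableSet⟩,
      ⟨V, hV, (hA.union hA').mono ?_⟩, fun x hx => hx.1.1, fun x hx => hx.1.2⟩
    rintro x (⟨hx, hn⟩ | ⟨hx, hn⟩)
    · exact absurd hx.2 hn
    · by_cases hxA : x ∈ A.1
      · exact Or.inr (Or.inr ⟨hVU' hx, fun hxA' => hn ⟨⟨hxA, hxA'⟩, hx⟩⟩)
      · exact Or.inl (Or.inr ⟨hVU hx, hxA⟩)
  · intro D hD hCD
    refine Set.Subset.antisymm ?_ hCD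
    intro A hAD
    obtain ⟨U, hUo, hAU⟩ := A.2.residualEq_isOpen
    have hm : IsMeagre (symmDiff A.1 U) := by
      unfold IsMeagre
      filter_upwards [hAU] with x hx
      have hx' : x ∈ A.1 ↔ x ∈ U := iff_of_eq hx
      rintro (⟨h1, h2⟩ | ⟨h1, h2⟩)
      · exact h2 (hx'.1 h1)
      · exact h2 (hx'.2 h1)
    refine ⟨⟨U, hUo⟩, aux_mem_quasipoint hB _ ?_, hm⟩
    intro V hV
    by_contra hne
    let E : BorelSet M := ⟨(V : Set M) \ A.1, V.isOpen.measurableSet.diff A.2⟩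
    have hE : E ∈ D := by
      refine hCD ⟨V, hV, hm.mono ?_⟩
      rintro x (⟨hx, hn⟩ | ⟨hx, hn⟩)
      · exact absurd hx.1 hn
      · have hxA : x ∈ A.1 := by
          by_contra hxA
          exact hn ⟨hx, hxA⟩
        exact Or.inl ⟨hxA, fun hxU => hne ⟨x, hxU, hx⟩⟩
    obtain ⟨c, hc, hcA, hcE⟩ := hD.2.2 A hAD E hE
    have : c = ⊥ := by
      apply Subtype.ext
      refine Set.eq_empty_of_forall_notMem fun x hx => ?_
      exact (hcE hx).2 (hcA hx)
    exact hD.2.1 (this ▸ hc)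
end

section
/- Let M be a topological space and let C be a quasipoint of the lattice B(M) of Borel subsets of M. Then C contains a quasipoint of the lattice T(M) of open subsets of M (i.e. there exists a quasipoint B of T(M) with B ⊆ C, and in that case B = C ∩ T(M)) if and only if for every open U ⊆ M the boundary ∂U = cl(U) ∩ cl(M \ U) does not belong to C. -/
open TopologicalSpace

/-- An open set, as a Borel set. -/
def Opens.toBorel {M : Type*} [TopologicalSpace M] [MeasurableSpace M] [BorelSpace M]
    (U : Opens M) : BorelSet M :=
  ⟨(U : Set M), U.2.measurableSet⟩

theorem IsQuasipoint.mem_of_meet {L : Type*} [PartialOrder L] [OrderBot L] {B : Set L}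
    (hB : IsQuasipoint B) (a : L) (f : L → L) (hf : ∀ b c, c ≤ f b ↔ c ≤ a ∧ c ≤ b)
    (h0 : ∀ b ∈ B, f b ≠ ⊥) : a ∈ B := by
  obtain ⟨⟨⟨b0, hb0⟩, _, hdir⟩, hmax⟩ := hB
  have key : {x | ∃ b ∈ B, f b ≤ x} = B := by
    apply hmax
    · refine ⟨⟨a, b0, hb0, ((hf _ _).1 le_rfl).1⟩, ?_, ?_⟩
      · rintro ⟨b, hb, h⟩
        exact h0 b hb (le_bot_iff.1 h)
      · rintro x ⟨b, hb, hx⟩ y ⟨c, hc, hy⟩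
        obtain ⟨d, hd, h1, h2⟩ := hdir b hb c hc
        have hd' := (hf d _).1 le_rfl
        exact ⟨f d, ⟨d, hd, le_rfl⟩, ((hf _ _).2 ⟨hd'.1, hd'.2.trans h1⟩).trans hx,
          ((hf _ _).2 ⟨hd'.1, hd'.2.trans h2⟩).trans hy⟩
    · intro b hb
      exact ⟨b, hb, ((hf _ _).1 le_rfl).2⟩
  rw [← key]
  exact ⟨b0, hb0, ((hf _ _).1 le_rfl).1⟩

theorem BorelSet.mem_of_inter {M : Type*} [MeasurableSpace M] {C : Set (BorelSet M)}
    (hC : IsQuasipoint C) (a : BorelSet M) (h : ∀ b ∈ C, (a.1 ∩ b.1).Nonempty) : a ∈ C := by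
  refine hC.mem_of_meet a (fun b => ⟨a.1 ∩ b.1, a.2.inter b.2⟩) ?_ ?_
  · intro b c
    exact Set.subset_inter_iff
  · intro b hb h'
    exact (h b hb).ne_empty (congrArg Subtype.val h')

theorem BorelSet.nonempty_of_mem {M : Type*} [MeasurableSpace M] {C : Set (BorelSet M)}
    (hC : IsQuasipoint C) (a : BorelSet M) (h : a ∈ C) : a.1.Nonempty := by
  rw [Set.nonempty_iff_ne_empty]
  intro h'
  have : a = ⊥ := Subtype.ext h'
  exact hC.1.2.1 (this ▸ h)

theorem BorelSet.mem_of_superset_inter {M : Type*} [MeasurableSpace M] {C : Set (BorelSet M)}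
    (hC : IsQuasipoint C) (a b x : BorelSet M) (ha : a ∈ C) (hb : b ∈ C)
    (h : a.1 ∩ b.1 ⊆ x.1) : x ∈ C := by
  apply BorelSet.mem_of_inter hC
  intro y hy
  obtain ⟨d, hd, h1, h2⟩ := hC.1.2.2 a ha b hb
  obtain ⟨e, he, h3, h4⟩ := hC.1.2.2 d hd y hy
  obtain ⟨z, hz⟩ := BorelSet.nonempty_of_mem hC e he
  exact ⟨z, h ⟨h1 (h3 hz), h2 (h3 hz)⟩, h4 hz⟩

theorem BorelSet.mem_or_compl {M : Type*} [MeasurableSpace M] {C : Set (BorelSet M)}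
    (hC : IsQuasipoint C) (a : BorelSet M) (h : a ∉ C) :
    (⟨a.1ᶜ, a.2.compl⟩ : BorelSet M) ∈ C := by
  have : ∃ b ∈ C, ¬ (a.1 ∩ b.1).Nonempty := by
    by_contra h'
    exact h (BorelSet.mem_of_inter hC a fun b hb => by
      by_contra h2
      exact h' ⟨b, hb, h2⟩)
  obtain ⟨b, hb, hab⟩ := this
  apply BorelSet.mem_of_superset_inter hC b b _ hb hb
  rintro z ⟨hz, _⟩ hz'
  exact hab ⟨z, hz', hz⟩

theorem BorelSet.trace_isFilterBase {M : Type*} [TopologicalSpace M]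
    [MeasurableSpace M] [BorelSpace M] {C : Set (BorelSet M)} (hC : IsQuasipoint C) :
    IsFilterBase {U : Opens M | Opens.toBorel U ∈ C} := by
  refine ⟨⟨⊤, ?_⟩, ?_, ?_⟩
  · obtain ⟨b, hb⟩ := hC.1.1
    exact BorelSet.mem_of_superset_inter hC b b _ hb hb (fun _ _ => trivial)
  · intro h
    obtain ⟨z, hz⟩ := BorelSet.nonempty_of_mem hC _ h
    exact hz
  · intro U hU V hV
    exact ⟨U ⊓ V, BorelSet.mem_of_superset_inter hC _ _ _ hU hV (fun _ h => h),
      inf_le_left, inf_le_right⟩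

/-- Let `C` be a quasipoint of the lattice of Borel subsets of a topological space `M`. Then `C`
contains a quasipoint of the lattice of open subsets of `M` — in which case that quasipoint is
`C ∩ T(M)` — if and only if no boundary `∂U = cl U ∩ cl (M \ U)` of an open set `U` belongs
to `C`. -/
theorem borel_quasipoint_contains_open_quasipoint_iff {M : Type*} [TopologicalSpace M]
    [MeasurableSpace M] [BorelSpace M] (C : Set (BorelSet M)) (hC : IsQuasipoint C) :
    ((∃ B : Set (Opens M), IsQuasipoint B ∧ ∀ U ∈ B, Opens.toBorel U ∈ C) ↔
      ∀ U : Opens M,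
        (⟨closure (U : Set M) ∩ closure ((U : Set M)ᶜ),
          (isClosed_closure.inter isClosed_closure).measurableSet⟩ : BorelSet M) ∉ C) ∧
    (∀ B : Set (Opens M), IsQuasipoint B → (∀ U ∈ B, Opens.toBorel U ∈ C) →
      B = {U : Opens M | Opens.toBorel U ∈ C}) := by
  have tr : ∀ B : Set (Opens M), IsQuasipoint B → (∀ U ∈ B, Opens.toBorel U ∈ C) →
      B = {U : Opens M | Opens.toBorel U ∈ C} := fun B hB h =>
    (hB.2 _ (BorelSet.trace_isFilterBase hC) h).symm
  refine ⟨⟨?_, ?_⟩, tr⟩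
  · rintro ⟨B, hB, hBC⟩ U hU
    let W : Opens M := ⟨(U : Set M) ∪ (closure (U : Set M))ᶜ,
      U.2.union isClosed_closure.isOpen_compl⟩
    have hW : W ∈ B := by
      refine hB.mem_of_meet W (fun V => W ⊓ V) (fun b c => le_inf_iff) ?_
      intro V hV h0
      have hVne : (V : Set M).Nonempty := BorelSet.nonempty_of_mem hC _ (hBC V hV)
      obtain ⟨z, hz⟩ := hVne
      have hn : ∀ y, y ∈ (W : Set M) → y ∈ (V : Set M) → False := by
        intro y h1 h2
        have : y ∈ W ⊓ V := ⟨h1, h2⟩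
        rw [h0] at this
        exact this
      by_cases hzc : z ∈ closure (U : Set M)
      · obtain ⟨y, hy1, hy2⟩ := mem_closure_iff.1 hzc _ V.2 hz
        exact hn y (Or.inl hy2) hy1
      · exact hn z (Or.inr hzc) hz
    obtain ⟨d, hd, h1, h2⟩ := hC.1.2.2 _ hU _ (hBC W hW)
    obtain ⟨z, hz⟩ := BorelSet.nonempty_of_mem hC d hd
    have hz1 := h1 hz
    have hz2 : z ∈ (U : Set M) ∪ (closure (U : Set M))ᶜ := h2 hz
    have hz3 : z ∈ closure ((U : Set M)ᶜ) := hz1.2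
    rw [U.isOpen.isClosed_compl.closure_eq] at hz3
    exact hz2.elim (fun h => hz3 h) (fun h => h hz1.1)
  · intro hb
    refine ⟨{U : Opens M | Opens.toBorel U ∈ C}, ⟨BorelSet.trace_isFilterBase hC, ?_⟩,
      fun U h => h⟩
    intro D hD hsub
    refine Set.Subset.antisymm ?_ hsub
    intro U hUD
    by_contra hU
    have h1 := BorelSet.mem_or_compl hC _ hU
    have h2 := BorelSet.mem_or_compl hC _ (hb U)
    let V : Opens M := ⟨(closure (U : Set M))ᶜ, isClosed_closure.isOpen_compl⟩
    have hV : Opens.toBorel V ∈ C := by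
      apply BorelSet.mem_of_superset_inter hC _ _ _ h1 h2
      rintro z ⟨hz1, hz2⟩ hz3
      exact hz2 ⟨hz3, subset_closure hz1⟩
    obtain ⟨d, hd, h3, h4⟩ := hD.2.2 U hUD V (hsub hV)
    have : d = ⊥ := by
      rw [eq_bot_iff]
      intro z hz
      exact (h4 hz (subset_closure (h3 hz))).elim
    exact hD.2.1 (this ▸ hd)
end
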